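/- Let t = 2^i·ℓ + 1 where i ≥ 1 and ℓ ≥ 3 is odd, with ℓ dividing 2^i − 1 and ℓ ≠ 2^i − 1. Then g_t(x,y) has an absolutely irreducible factor defined over F_2, i.e., there is a nonconstant polynomial in F_2[x,y] which divides g_t and is irreducible over the algebraic closure of F_2. -/

import Mathlib

open MvPolynomial

/-!
Over an algebraic closure of `𝔽₂` put `q = 2 ^ i` and `h = f_t / (x + 1)`, of degree `q ℓ`. The
singular points of `h = 0` are ordinary and are the points with `x`, `y` and `x + y + 1` in the
group `μ` of `ℓ`-th roots of unity: at most `ℓ` of multiplicity `q` on the line `x = 1`, and at most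
`(ℓ - 1) ^ 2` of multiplicity `q + 1` elsewhere, because `μ` has odd order and hence is not stable
under a nonzero translation. Blow up these points. Since `2 ℓ < q`, the strict transform of `h = 0`
has positive self-intersection. The strict transforms of its components are pairwise disjoint, so
the self-intersections add up; those of the lines `y = 1` and `x = y` are not positive, hence some
irreducible factor `a` of `g_t` has positive self-intersection. By the Hodge index theorem no other
component does. As self-intersection is invariant under Frobenius, `a` is associated to its
conjugate, and therefore to a polynomial over `𝔽₂`.

Only the inequality `deg a * deg b ≤ ∑ mult a * mult b` between complementary factors is needed.
It comes from the resultant with respect to `y`, whose valuation at a singular fiber is computed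
from the Hensel lifts of the branches.
-/

section Hensel

open scoped Polynomial

variable {R : Type*} [CommRing R] {I : Ideal R} [HenselianRing R I]

theorem exists_isUnit_pow_add_two_eq {c : R} (hc : c ∈ I) (s : R[X]) {n : ℕ}
    (hs : s.natDegree ≤ n) : ∃ u, IsUnit u ∧ u ^ (n + 2) = u ^ (n + 1) + c * s.eval u := by
  set Q : R[X] := Polynomial.X ^ (n + 2) + (-Polynomial.X ^ (n + 1) - Polynomial.C c * s)
  have hQ : Q.Monic := Polynomial.monic_X_pow_add (by
    refine (Polynomial.degree_sub_le _ _).trans_lt (max_lt ?_ ?_)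
    · rw [Polynomial.degree_neg]
      exact (Polynomial.degree_X_pow_le _).trans_lt (by exact_mod_cast by omega)
    · refine Polynomial.degree_le_natDegree.trans_lt ?_
      exact_mod_cast ((Polynomial.natDegree_C_mul_le c s).trans hs).trans_lt (by omega))
  have hcI : Ideal.Quotient.mk I c = 0 := Ideal.Quotient.eq_zero_iff_mem.mpr hc
  obtain ⟨u, hu, hu1⟩ := HenselianRing.is_henselian (I := I) Q hQ 1
    (Ideal.Quotient.eq_zero_iff_mem.mp (by simp [Q, hcI]))
    (by
      convert isUnit_one
      have : Ideal.Quotient.mk I (Q.derivative.eval 1) = n + 1 + 1 - (n + 1) := by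
        simp [Q, hcI]
      rw [this, add_sub_cancel_left])
  refine ⟨u, Ideal.isUnit_of_sub_one_mem_jacobson_bot u (HenselianRing.jac hu1), ?_⟩
  have : u ^ (n + 2) + (-u ^ (n + 1) - c * s.eval u) = 0 := by simpa [Q] using hu
  linear_combination this

-- Substituting `-p(0) / (p'(0) u)` turns the equation into one for `u` which is monic.
theorem exists_isRoot_mem_of_isUnit_coeff_one {p : R[X]} (h₀ : p.coeff 0 ∈ I)
    (h₁ : IsUnit (p.coeff 1)) : ∃ b ∈ I, p.IsRoot b := by
  obtain ⟨d, hd⟩ := h₁.exists_right_inv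
  set c := p.coeff 0
  set r : R[X] := p.divX.divX.comp (Polynomial.C (-(c * d)) * Polynomial.X)
  have hp (y : R) : p.eval y = c + p.coeff 1 * y + y ^ 2 * p.divX.divX.eval y := by
    conv_lhs => rw [← Polynomial.divX_mul_X_add p, ← Polynomial.divX_mul_X_add p.divX]
    simp only [Polynomial.coeff_divX, zero_add, Polynomial.eval_add, Polynomial.eval_mul,
      Polynomial.eval_X, Polynomial.eval_C, c]
    ring
  obtain ⟨u, ⟨u, rfl⟩, hu⟩ := exists_isUnit_pow_add_two_eq (I := I) h₀
    (Polynomial.C (-d ^ 2) * r.reverse)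
    ((Polynomial.natDegree_C_mul_le _ _).trans (Polynomial.reverse_natDegree_le r))
  refine ⟨-(c * d) * ↑u⁻¹, I.mul_mem_right _ (I.neg_mem (I.mul_mem_right _ h₀)), ?_⟩
  let : Invertible (↑u⁻¹ : R) := u⁻¹.invertible
  have hr : r.reverse.eval (u : R) = u ^ r.natDegree * p.divX.divX.eval (-(c * d) * ↑u⁻¹) := by
    have h := Polynomial.eval₂_reverse_mul_pow (RingHom.id R) (↑u⁻¹ : R) r
    rw [invOf_units, inv_inv, Polynomial.eval₂_id, Polynomial.eval₂_id,
      Polynomial.eval_comp, Polynomial.eval_mul, Polynomial.eval_C, Polynomial.eval_X] at h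
    rw [← h, mul_left_comm, ← mul_pow, Units.mul_inv, one_pow, mul_one]
  refine ((u ^ (r.natDegree + 2)).isUnit.mul_right_eq_zero).mp ?_
  rw [Polynomial.eval_mul, Polynomial.eval_C, hr] at hu
  rw [hp]
  have huv : (u : R) * ↑u⁻¹ = 1 := u.mul_inv
  push_cast
  linear_combination (-c * u ^ (r.natDegree + 2) * ↑u⁻¹) * hd + c * hu +
    (u ^ r.natDegree * c ^ 2 * d ^ 2 * p.divX.divX.eval (-(c * d) * ↑u⁻¹) * (u * ↑u⁻¹ + 1)
      - c * u ^ (r.natDegree + 1)) * huv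

/-- The polynomial need not be monic, unlike in the definition of `HenselianRing`. -/
theorem exists_isRoot_sub_mem {p : R[X]} {a : R} (h₀ : p.eval a ∈ I)
    (h₁ : IsUnit (p.derivative.eval a)) : ∃ b, p.IsRoot b ∧ b - a ∈ I := by
  obtain ⟨b, hb, hroot⟩ := exists_isRoot_mem_of_isUnit_coeff_one (I := I) (p := p.taylor a)
    (by rwa [Polynomial.taylor_coeff_zero]) (by rwa [Polynomial.taylor_coeff_one])
  refine ⟨b + a, ?_, by rwa [add_sub_cancel_right]⟩
  rwa [Polynomial.IsRoot, Polynomial.taylor_eval] at hroot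

end Hensel

section Residue

open scoped Polynomial PowerSeries

variable {k : Type*} [Field k]

/-- The special fiber of a family of polynomials over the formal disc `Spec k⟦X⟧`. -/
noncomputable abbrev specialFiber (P : k⟦X⟧[X]) : k[X] :=
  P.map PowerSeries.constantCoeff

theorem exists_isRoot_constantCoeff_eq {p : k⟦X⟧[X]} {s : k}
    (h₀ : (specialFiber p).IsRoot s)
    (h₁ : (specialFiber p).derivative.eval s ≠ 0) :
    ∃ y, p.IsRoot y ∧ y.constantCoeff = s := by
  have hmem (y : k⟦X⟧) : y ∈ Ideal.span {(PowerSeries.X : k⟦X⟧)} ↔ y.constantCoeff = 0 := by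
    rw [Ideal.mem_span_singleton, PowerSeries.X_dvd_iff]
  obtain ⟨y, hy, hys⟩ := exists_isRoot_sub_mem (I := Ideal.span {(PowerSeries.X : k⟦X⟧)})
    (p := p) (a := PowerSeries.C s)
    (by rwa [hmem, ← Polynomial.eval_map_apply, PowerSeries.constantCoeff_C])
    (by rwa [PowerSeries.isUnit_iff_constantCoeff, isUnit_iff_ne_zero,
      ← Polynomial.eval_map_apply, ← Polynomial.derivative_map, PowerSeries.constantCoeff_C])
  exact ⟨y, hy, by simpa [hmem, sub_eq_zero] using hys⟩

/-- `(0, β)` is an ordinary point of multiplicity `n` on the curve germ `P = 0`: blowing it up by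
`Y = β + X Y'` splits off the factor `X ^ n`, and the strict transform meets the exceptional line
in `n` distinct points. -/
def IsOrdinaryAt (P : k⟦X⟧[X]) (β : k) (n : ℕ) : Prop :=
  ∃ W : k⟦X⟧[X], (specialFiber W).Separable ∧ (specialFiber W).natDegree = n ∧
    P.comp (Polynomial.C (PowerSeries.C β) + Polynomial.C PowerSeries.X * Polynomial.X) =
      Polynomial.C PowerSeries.X ^ n * W

namespace IsOrdinaryAt

variable {P : k⟦X⟧[X]} {β : k} {n : ℕ}

theorem rootMultiplicity_le (h : IsOrdinaryAt P β n) :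
    (specialFiber P).rootMultiplicity β ≤ n := by
  obtain ⟨W, hsep, hdeg, hW⟩ := h
  have hcoeff : (P.taylor (PowerSeries.C β)).coeff n = W.coeff n := by
    have h : (P.taylor (PowerSeries.C β)).comp (Polynomial.C PowerSeries.X * Polynomial.X) =
        Polynomial.C (PowerSeries.X ^ n) * W := by
      rw [Polynomial.C_pow, ← hW, Polynomial.taylor_apply, Polynomial.comp_assoc, add_comm]
      simp
    have h' := congrArg (·.coeff n) h
    simp only [Polynomial.comp_C_mul_X_coeff, Polynomial.coeff_C_mul] at h'
    exact mul_right_cancel₀ (pow_ne_zero n PowerSeries.X_ne_zero) (h'.trans (mul_comm _ _))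
  rw [Polynomial.rootMultiplicity_eq_natTrailingDegree, ← Polynomial.taylor_apply]
  apply Polynomial.natTrailingDegree_le_of_ne_zero
  have hmap : (specialFiber P).taylor β =
      (P.taylor (PowerSeries.C β)).map PowerSeries.constantCoeff := by
    simp [Polynomial.taylor_apply, Polynomial.map_comp]
  rw [hmap, Polynomial.coeff_map, hcoeff, ← Polynomial.coeff_map, ← hdeg]
  exact Polynomial.leadingCoeff_ne_zero.mpr hsep.ne_zero

theorem exists_roots [IsAlgClosed k] (h : IsOrdinaryAt P β n) :
    ∃ S : Finset k⟦X⟧, S.card = n ∧ (∀ y ∈ S, P.IsRoot y ∧ y.constantCoeff = β) ∧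
      (S : Set k⟦X⟧).Pairwise fun y z ↦ y - z ∣ PowerSeries.X := by
  classical
  obtain ⟨W, hsep, hdeg, hW⟩ := h
  have hlift (s : k) : ∃ y, s ∈ (specialFiber W).roots.toFinset →
      W.IsRoot y ∧ y.constantCoeff = s := by
    by_cases hs : s ∈ (specialFiber W).roots.toFinset
    · rw [Multiset.mem_toFinset, Polynomial.mem_roots hsep.ne_zero] at hs
      obtain ⟨y, hy⟩ := exists_isRoot_constantCoeff_eq hs
        (hsep.eval₂_derivative_ne_zero (RingHom.id k) (by rwa [Polynomial.eval₂_id]))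
      exact ⟨y, fun _ ↦ hy⟩
    · exact ⟨0, fun h ↦ absurd h hs⟩
  choose y hy using hlift
  have hinj : Set.InjOn (fun s ↦ PowerSeries.C β + PowerSeries.X * y s)
      (specialFiber W).roots.toFinset := by
    intro s hs s' hs' heq
    rw [← (hy s hs).2, ← (hy s' hs').2,
      mul_left_cancel₀ PowerSeries.X_ne_zero (add_left_cancel heq)]
  refine ⟨(specialFiber W).roots.toFinset.image (PowerSeries.C β + PowerSeries.X * y ·), ?_, ?_, ?_⟩
  · rw [Finset.card_image_of_injOn hinj, Multiset.toFinset_card_of_nodup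
      (Polynomial.nodup_roots hsep), ← hdeg,
      (IsAlgClosed.splits (specialFiber W)).natDegree_eq_card_roots]
  · simp only [Finset.forall_mem_image]
    intro s hs
    have := congrArg (Polynomial.eval (y s)) hW
    refine ⟨?_, by simp⟩
    simpa [Polynomial.eval_comp, (hy s hs).1.eq_zero] using this
  · simp only [Finset.coe_image]
    rintro _ ⟨s, hs, rfl⟩ _ ⟨s', hs', rfl⟩ hne
    have hunit : IsUnit (y s - y s') := by
      rw [PowerSeries.isUnit_iff_constantCoeff, map_sub, (hy s hs).2, (hy s' hs').2,
        isUnit_iff_ne_zero, sub_ne_zero]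
      rintro rfl
      exact hne rfl
    rw [add_sub_add_left_eq_sub, ← mul_sub]
    exact hunit.dvd_mul_right.mp dvd_rfl

end IsOrdinaryAt

theorem isOrdinaryAt_zero {P : k⟦X⟧[X]} {β : k} (h : (specialFiber P).eval β ≠ 0) :
    IsOrdinaryAt P β 0 := by
  refine ⟨_, ?_, ?_, (one_mul _).symm⟩ <;>
    simp only [specialFiber, Polynomial.map_comp, Polynomial.map_add, Polynomial.map_mul,
      Polynomial.map_C, Polynomial.map_X, PowerSeries.constantCoeff_X, PowerSeries.constantCoeff_C,
      map_zero, zero_mul, add_zero, Polynomial.comp_C, Polynomial.natDegree_C]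
  exact (Polynomial.separable_C _).mpr h.isUnit

theorem isOrdinaryAt_one {P : k⟦X⟧[X]} {β : k} (h : (specialFiber P).IsRoot β)
    (h' : (specialFiber P).derivative.eval β ≠ 0) : IsOrdinaryAt P β 1 := by
  obtain ⟨e, he⟩ : PowerSeries.X ∣ P.eval (PowerSeries.C β) := by
    rw [PowerSeries.X_dvd_iff, ← Polynomial.eval_map_apply]
    simpa using h
  set c := P.derivative.eval (PowerSeries.C β) with hc
  have hc' : c.constantCoeff ≠ 0 := by
    rwa [hc, ← Polynomial.eval_map_apply, ← Polynomial.derivative_map, PowerSeries.constantCoeff_C]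
  obtain ⟨K, hK⟩ := (P.map Polynomial.C).binomExpansion (Polynomial.C (PowerSeries.C β))
    (Polynomial.C PowerSeries.X * Polynomial.X)
  set W : k⟦X⟧[X] := Polynomial.C c * Polynomial.X + Polynomial.C e +
    Polynomial.C PowerSeries.X * (Polynomial.X ^ 2 * K)
  have hW : specialFiber W =
      Polynomial.C c.constantCoeff * Polynomial.X + Polynomial.C e.constantCoeff := by
    simp [specialFiber, W]
  refine ⟨W, ?_, ?_, ?_⟩
  · rw [hW, Polynomial.separable_def]
    exact ⟨0, Polynomial.C c.constantCoeff⁻¹, by simp [← Polynomial.C_mul, hc']⟩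
  · rw [hW, Polynomial.natDegree_linear hc']
  · rw [Polynomial.eval_map, ← Polynomial.comp, Polynomial.derivative_map,
      Polynomial.eval_map_apply, Polynomial.eval_map_apply, he] at hK
    rw [hK, Polynomial.C_mul]
    ring

section Splitting

variable {P : k⟦X⟧[X]}

theorem specialFiber_ne_zero (hP : IsUnit P.leadingCoeff) : specialFiber P ≠ 0 := by
  rw [← Polynomial.leadingCoeff_ne_zero,
    Polynomial.leadingCoeff_map_eq_of_isUnit_leadingCoeff _ hP]
  exact (hP.map PowerSeries.constantCoeff).ne_zero

-- The Hensel lifts at the ordinary points are pairwise distinct and exhaust the degree of `P`.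
theorem exists_finset_val_eq_roots [IsAlgClosed k] (hP : IsUnit P.leadingCoeff)
    (hord : ∀ β, ∃ n, IsOrdinaryAt P β n) : ∃ S : Finset k⟦X⟧, S.val = P.roots ∧
      S.card = P.natDegree ∧ ∀ y ∈ S, ∀ z ∈ S, y ≠ z → y.constantCoeff = z.constantCoeff →
        y - z ∣ PowerSeries.X := by
  classical
  have hP₀ : P ≠ 0 := Polynomial.leadingCoeff_ne_zero.mp hP.ne_zero
  choose n hn using hord
  choose S hcard hroot hdvd using fun β ↦ (hn β).exists_roots
  set B := (specialFiber P).roots.toFinset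
  have hdisj : (B : Set k).PairwiseDisjoint S := fun β _ γ _ hne ↦
    Finset.disjoint_left.mpr fun y hy hy' ↦ hne ((hroot β y hy).2.symm.trans (hroot γ y hy').2)
  have hsub : (B.biUnion S).val ≤ P.roots := by
    rw [Finset.val_le_iff_val_subset]
    intro y hy
    obtain ⟨β, -, hβ⟩ := Finset.mem_biUnion.mp hy
    exact (Polynomial.mem_roots hP₀).mpr (hroot β y hβ).1
  have hdeg : P.natDegree ≤ (B.biUnion S).card := by
    rw [Finset.card_biUnion hdisj,
      ← Polynomial.natDegree_map_eq_of_isUnit_leadingCoeff PowerSeries.constantCoeff hP,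
      (IsAlgClosed.splits (specialFiber P)).natDegree_eq_card_roots,
      ← Multiset.toFinset_sum_count_eq]
    refine Finset.sum_le_sum fun β _ ↦ ?_
    rw [Polynomial.count_roots, hcard]
    exact (hn β).rootMultiplicity_le
  have heq := Multiset.eq_of_le_of_card_le hsub (P.card_roots'.trans hdeg)
  refine ⟨B.biUnion S, heq, le_antisymm ?_ hdeg, fun y hy z hz hne hyz ↦ ?_⟩
  · rw [Finset.card_def, heq]
    exact P.card_roots'
  · obtain ⟨β, -, hβ⟩ := Finset.mem_biUnion.mp hy
    obtain ⟨γ, -, hγ⟩ := Finset.mem_biUnion.mp hz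
    obtain rfl : β = γ := by rw [← (hroot β y hβ).2, hyz, (hroot γ z hγ).2]
    exact hdvd β hβ hγ hne

variable {A B : k⟦X⟧[X]}

theorem eval_dvd_X_pow (hB : B.Splits) (hlead : IsUnit B.leadingCoeff) {y : k⟦X⟧}
    (hdvd : ∀ z ∈ B.roots, y.constantCoeff = z.constantCoeff → y - z ∣ PowerSeries.X) :
    B.eval y ∣ PowerSeries.X ^ (specialFiber B).rootMultiplicity y.constantCoeff := by
  classical
  let contribution (s : k) : k⟦X⟧ := if s = y.constantCoeff then PowerSeries.X else 1
  have hprod : (B.roots.map (contribution ∘ PowerSeries.constantCoeff)).prod =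
      PowerSeries.X ^ (specialFiber B).rootMultiplicity y.constantCoeff := by
    rw [← Multiset.map_map, ← hB.roots_map_of_ne_zero (specialFiber_ne_zero hlead),
      Multiset.prod_map_eq_pow_single y.constantCoeff fun s hs _ ↦ if_neg hs,
      Polynomial.count_roots, if_pos rfl]
  rw [hB.eval_eq_prod_roots, hlead.mul_left_dvd, ← hprod]
  refine Multiset.prod_dvd_prod_of_dvd _ _ fun z hz ↦ ?_
  by_cases hzy : z.constantCoeff = y.constantCoeff
  · simpa [contribution, hzy] using hdvd z hz hzy.symm
  · refine IsUnit.dvd (PowerSeries.isUnit_iff_constantCoeff.mpr ?_)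
    rw [map_sub]
    exact (sub_ne_zero.mpr fun h ↦ hzy h.symm).isUnit

theorem resultant_dvd_X_pow_of_splits (hA : A.Splits) (hlead : IsUnit A.leadingCoeff)
    (hB : ∀ y ∈ A.roots,
      B.eval y ∣ PowerSeries.X ^ (specialFiber B).rootMultiplicity y.constantCoeff)
    {Z : Finset k}
    (hZ : ∀ β, (specialFiber A).IsRoot β → (specialFiber B).IsRoot β → β ∈ Z) :
    A.resultant B ∣ PowerSeries.X ^ ∑ β ∈ Z,
      (specialFiber A).rootMultiplicity β * (specialFiber B).rootMultiplicity β := by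
  classical
  have hprod : (A.roots.map (B.eval ·)).prod ∣
      PowerSeries.X ^ ∑ β ∈ (specialFiber A).roots.toFinset,
        (specialFiber A).rootMultiplicity β * (specialFiber B).rootMultiplicity β := by
    refine (Multiset.prod_dvd_prod_of_dvd _ _ hB).trans (dvd_of_eq ?_)
    rw [← Finset.prod_pow_eq_pow_sum]
    simp_rw [← Polynomial.count_roots (specialFiber A), mul_comm (Multiset.count _ _), pow_mul]
    rw [← Finset.prod_multiset_map_count _ fun β : k ↦
        (PowerSeries.X : k⟦X⟧) ^ (specialFiber B).rootMultiplicity β,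
      hA.roots_map_of_ne_zero (specialFiber_ne_zero hlead), Multiset.map_map]
    rfl
  rw [Polynomial.resultant_eq_prod_eval A B _ le_rfl hA, (hlead.pow _).mul_left_dvd]
  refine hprod.trans (pow_dvd_pow _ (Finset.sum_le_sum_of_ne_zero fun β _ hβ ↦ hZ β ?_ ?_))
  · exact (Polynomial.rootMultiplicity_pos'.mp (Nat.pos_of_ne_zero (left_ne_zero_of_mul hβ))).2
  · exact (Polynomial.rootMultiplicity_pos'.mp (Nat.pos_of_ne_zero (right_ne_zero_of_mul hβ))).2

-- The valuation of the resultant of `A` and `B` is the intersection number of the two curve germs.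
-- Distinct smooth branches through an ordinary point meet with multiplicity one.
theorem resultant_dvd_X_pow [IsAlgClosed k] (hP : IsUnit P.leadingCoeff)
    (hord : ∀ β, ∃ n, IsOrdinaryAt P β n) (hAB : A * B ∣ P) {Z : Finset k}
    (hZ : ∀ β, (specialFiber A).IsRoot β → (specialFiber B).IsRoot β → β ∈ Z) :
    A.resultant B ∣ PowerSeries.X ^ ∑ β ∈ Z,
      (specialFiber A).rootMultiplicity β * (specialFiber B).rootMultiplicity β := by
  have hP₀ : P ≠ 0 := Polynomial.leadingCoeff_ne_zero.mp hP.ne_zero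
  obtain ⟨S, hS, hcard, hdvd⟩ := exists_finset_val_eq_roots hP hord
  have hsplit : P.Splits := by
    rw [Polynomial.splits_iff_card_roots, ← hS, ← hcard, Finset.card_def]
  have hlead : IsUnit (A * B).leadingCoeff :=
    isUnit_of_dvd_unit (Polynomial.leadingCoeff_dvd_leadingCoeff hAB) hP
  rw [Polynomial.leadingCoeff_mul, IsUnit.mul_iff] at hlead
  have hle : A.roots + B.roots ≤ S.val := by
    rw [hS, ← Polynomial.roots_mul (ne_zero_of_dvd_ne_zero hP₀ hAB)]
    exact Polynomial.roots.le_of_dvd hP₀ hAB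
  have hdisj := (Multiset.nodup_add.mp (Multiset.nodup_of_le hle S.nodup)).2.2
  refine resultant_dvd_X_pow_of_splits (hsplit.of_dvd hP₀ (dvd_of_mul_right_dvd hAB)) hlead.1
    (fun y hy ↦ ?_) hZ
  refine eval_dvd_X_pow (hsplit.of_dvd hP₀ (dvd_of_mul_left_dvd hAB)) hlead.2
    fun z hz ↦ hdvd y ?_ z ?_ ?_
  · exact Multiset.mem_of_le hle (Multiset.mem_add.mpr (.inl hy))
  · exact Multiset.mem_of_le hle (Multiset.mem_add.mpr (.inr hz))
  · rintro rfl
    exact Multiset.disjoint_left.mp hdisj hy hz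

end Splitting

end Residue

section Fiber

open scoped Polynomial PowerSeries

variable {k : Type*} [Field k]

/-- The restriction of a plane curve equation to the vertical line through an `A`-point `x` of the
first axis; `x` may be a number, the generic point `X`, or the formal disc `ζ + X` around `ζ`. -/
noncomputable def verticalFiber {A : Type*} [CommRing A] [Algebra k A] (x : A) :
    MvPolynomial (Fin 2) k →ₐ[k] A[X] :=
  aeval ![Polynomial.C x, Polynomial.X]

/-- The multiplicity of the point `p` on the vertical fiber of the curve `a = 0` through `p`. -/
noncomputable def fiberMultiplicity (p : k × k) (a : MvPolynomial (Fin 2) k) : ℕ :=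
  (verticalFiber p.1 a).rootMultiplicity p.2

/-- Noether position with respect to the first coordinate: the projective closure of the curve
misses the point at infinity on the vertical lines, so the curve has `totalDegree` points on each
of them. -/
def IsNoetherPosition (a : MvPolynomial (Fin 2) k) : Prop :=
  IsUnit (verticalFiber (Polynomial.X : k[X]) a).leadingCoeff ∧
    (verticalFiber (Polynomial.X : k[X]) a).natDegree = a.totalDegree

theorem verticalFiber_X_zero {A : Type*} [CommRing A] [Algebra k A] (x : A) :
    verticalFiber x (X 0 : MvPolynomial (Fin 2) k) = Polynomial.C x := by
  simp [verticalFiber]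

theorem verticalFiber_X_one {A : Type*} [CommRing A] [Algebra k A] (x : A) :
    verticalFiber x (X 1 : MvPolynomial (Fin 2) k) = Polynomial.X := by
  simp [verticalFiber]

theorem map_verticalFiber_of_comp {A B K : Type*} [CommRing A] [CommRing B] [Field K]
    [Algebra k A] [Algebra K B] {φ : A →+* B} {σ : k →+* K}
    (h : φ.comp (algebraMap k A) = (algebraMap K B).comp σ) (x : A)
    (a : MvPolynomial (Fin 2) k) :
    (verticalFiber x a).map φ = verticalFiber (φ x) (map σ a) := by
  suffices (Polynomial.mapRingHom φ).comp (verticalFiber x).toRingHom =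
      (verticalFiber (φ x)).toRingHom.comp (map σ) from
    RingHom.congr_fun this a
  refine ringHom_ext (fun c ↦ ?_) fun j ↦ ?_
  · simpa [Polynomial.algebraMap_apply] using RingHom.congr_fun h c
  · fin_cases j <;> simp [verticalFiber]

theorem map_verticalFiber {A B : Type*} [CommRing A] [CommRing B] [Algebra k A] [Algebra k B]
    {φ : A →+* B} (h : φ.comp (algebraMap k A) = algebraMap k B) (x : A)
    (a : MvPolynomial (Fin 2) k) : (verticalFiber x a).map φ = verticalFiber (φ x) a := by
  rw [map_verticalFiber_of_comp (σ := RingHom.id k) (by rw [h, RingHom.comp_id]), map_id]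

theorem map_verticalFiber_X {A : Type*} [CommRing A] [Algebra k A] (x : A)
    (a : MvPolynomial (Fin 2) k) :
    (verticalFiber (Polynomial.X : k[X]) a).map (Polynomial.aeval x : k[X] →ₐ[k] A) =
      verticalFiber x a := by
  rw [map_verticalFiber (AlgHom.comp_algebraMap _), RingHom.coe_coe, Polynomial.aeval_X]

theorem specialFiber_verticalFiber (ζ : k) (a : MvPolynomial (Fin 2) k) :
    specialFiber (verticalFiber (PowerSeries.C ζ + PowerSeries.X) a) = verticalFiber ζ a := by
  rw [specialFiber, map_verticalFiber (RingHom.ext PowerSeries.constantCoeff_C)]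
  simp

theorem eval_verticalFiber (v w : k) (a : MvPolynomial (Fin 2) k) :
    (verticalFiber v a).eval w = eval ![v, w] a := by
  suffices (Polynomial.evalRingHom w).comp (verticalFiber v).toRingHom =
      eval ![v, w] from RingHom.congr_fun this a
  refine ringHom_ext (fun c ↦ ?_) fun j ↦ ?_
  · simp
  · fin_cases j <;> simp [verticalFiber]

theorem natDegree_verticalFiber_le {A : Type*} [CommRing A] [Algebra k A] (x : A)
    (a : MvPolynomial (Fin 2) k) : (verticalFiber x a).natDegree ≤ a.totalDegree := by
  rw [verticalFiber, ← aeval_map_algebraMap A, ← mul_one a.totalDegree]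
  refine aeval_natDegree_le _ (Finset.sup_mono (support_map_subset _ _)) _ fun j ↦ ?_
  fin_cases j
  · simp
  · exact Polynomial.natDegree_X_le

namespace IsNoetherPosition

variable {a b : MvPolynomial (Fin 2) k}

theorem ne_zero (ha : IsNoetherPosition a) : a ≠ 0 := by
  rintro rfl
  simpa using ha.1.ne_zero

theorem of_dvd (hb : IsNoetherPosition b) (hab : a ∣ b) : IsNoetherPosition a := by
  obtain ⟨c, rfl⟩ := hab
  obtain ⟨hunit, hdeg⟩ := hb
  have hne : a * c ≠ 0 := ne_zero ⟨hunit, hdeg⟩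
  rw [map_mul, Polynomial.leadingCoeff_mul, IsUnit.mul_iff] at hunit
  rw [map_mul, Polynomial.natDegree_mul (Polynomial.leadingCoeff_ne_zero.mp hunit.1.ne_zero)
    (Polynomial.leadingCoeff_ne_zero.mp hunit.2.ne_zero), totalDegree_mul_of_isDomain
    (left_ne_zero_of_mul hne) (right_ne_zero_of_mul hne)] at hdeg
  have hdega := natDegree_verticalFiber_le (Polynomial.X : k[X]) a
  have hdegc := natDegree_verticalFiber_le (Polynomial.X : k[X]) c
  exact ⟨hunit.1, by omega⟩

variable {A : Type*} [CommRing A] [Algebra k A]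

theorem isUnit_leadingCoeff [Nontrivial A] (ha : IsNoetherPosition a) (x : A) :
    IsUnit (verticalFiber x a).leadingCoeff := by
  rw [← map_verticalFiber_X, Polynomial.leadingCoeff_map_eq_of_isUnit_leadingCoeff _ ha.1]
  exact ha.1.map _

theorem natDegree_verticalFiber [Nontrivial A] (ha : IsNoetherPosition a) (x : A) :
    (verticalFiber x a).natDegree = a.totalDegree := by
  rw [← map_verticalFiber_X, Polynomial.natDegree_map_eq_of_isUnit_leadingCoeff _ ha.1, ha.2]

theorem verticalFiber_ne_zero [Nontrivial A] (ha : IsNoetherPosition a) (x : A) :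
    verticalFiber x a ≠ 0 :=
  Polynomial.leadingCoeff_ne_zero.mp (ha.isUnit_leadingCoeff x).ne_zero

end IsNoetherPosition

/-- The curve in the coordinates `1 / x`, `y / x` near the line at infinity. -/
noncomputable def chartAtInfinity (a : MvPolynomial (Fin 2) k) : MvPolynomial (Fin 2) k :=
  ∑ m ∈ a.support, C (a.coeff m) * (X 0 ^ (a.totalDegree - (m 0 + m 1)) * X 1 ^ m 1)

theorem eval_chartAtInfinity (a : MvPolynomial (Fin 2) k) {v : k} (hv : v ≠ 0) (w : k) :
    eval ![v, w] (chartAtInfinity a) = v ^ a.totalDegree * eval ![v⁻¹, v⁻¹ * w] a := by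
  rw [chartAtInfinity, map_sum, eval_eq', Finset.mul_sum]
  refine Finset.sum_congr rfl fun m hm ↦ ?_
  obtain ⟨j, hj⟩ := Nat.exists_eq_add_of_le (le_totalDegree hm)
  rw [Finsupp.sum_fintype _ _ fun _ ↦ rfl, Fin.sum_univ_two] at hj
  rw [hj, Nat.add_sub_cancel_left]
  simp only [map_mul, map_pow, eval_C, eval_X, Fin.prod_univ_two, Matrix.cons_val_zero,
    Matrix.cons_val_one, pow_add, mul_pow, inv_pow]
  field_simp

theorem mvPolynomial_ext_of_eval [Infinite k] {a b : MvPolynomial (Fin 2) k} (s : Finset k)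
    (h : ∀ v ∉ s, ∀ w, eval ![v, w] a = eval ![v, w] b) : a = b := by
  refine funext_set ![(s : Set k)ᶜ, Set.univ] (fun j ↦ ?_) fun p hp ↦ ?_
  · fin_cases j
    · exact s.finite_toSet.infinite_compl
    · exact Set.infinite_univ
  · have hp' := h (p 0) (by simpa using hp 0 trivial) (p 1)
    rwa [show p = ![p 0, p 1] from List.ofFn_inj.mp rfl]

theorem chartAtInfinity_mul [Infinite k] {a b : MvPolynomial (Fin 2) k} (ha : a ≠ 0) (hb : b ≠ 0) :
    chartAtInfinity (a * b) = chartAtInfinity a * chartAtInfinity b := by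
  refine mvPolynomial_ext_of_eval {0} fun v hv w ↦ ?_
  rw [Finset.mem_singleton] at hv
  rw [map_mul, eval_chartAtInfinity _ hv, eval_chartAtInfinity _ hv, eval_chartAtInfinity _ hv,
    totalDegree_mul_of_isDomain ha hb, map_mul]
  ring

theorem chartAtInfinity_dvd_chartAtInfinity [Infinite k] {a b : MvPolynomial (Fin 2) k}
    (hb : b ≠ 0) (hab : a ∣ b) : chartAtInfinity a ∣ chartAtInfinity b := by
  obtain ⟨c, rfl⟩ := hab
  rw [chartAtInfinity_mul (left_ne_zero_of_mul hb) (right_ne_zero_of_mul hb)]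
  exact dvd_mul_right _ _

theorem verticalFiber_chartAtInfinity [Infinite k] {a : MvPolynomial (Fin 2) k}
    (ha : IsNoetherPosition a) {v : k} (hv : v ≠ 0) :
    verticalFiber v (chartAtInfinity a) = (verticalFiber v⁻¹ a).scaleRoots v := by
  refine Polynomial.funext fun w ↦ ?_
  have h := Polynomial.scaleRoots_eval_mul (verticalFiber v⁻¹ a) (v⁻¹ * w) v
  rw [mul_inv_cancel_left₀ hv, eval_verticalFiber, ha.natDegree_verticalFiber] at h
  rw [eval_verticalFiber, eval_chartAtInfinity a hv, h]

theorem le_natDegree_of_eval_eq_pow_mul_eval_inv [Infinite k] {r s : k[X]} {N : ℕ}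
    (h : ∀ v ≠ 0, s.eval v = v ^ N * r.eval v⁻¹) (h₀ : s.eval 0 ≠ 0) : N ≤ r.natDegree := by
  by_contra! hN
  have hs : s = Polynomial.X ^ (N - r.natDegree) * r.reverse := by
    refine Polynomial.eq_of_infinite_eval_eq _ _
      (((Set.finite_singleton (0 : k)).infinite_compl).mono fun v hv ↦ ?_)
    let : Invertible v⁻¹ := invertibleOfNonzero (inv_ne_zero hv)
    have hrev := Polynomial.eval₂_reverse_mul_pow (RingHom.id k) v⁻¹ r
    rw [invOf_eq_inv, inv_inv, Polynomial.eval₂_id, Polynomial.eval₂_id] at hrev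
    rw [Set.mem_ofPred_eq, h v hv, ← hrev, Polynomial.eval_mul, Polynomial.eval_pow,
      Polynomial.eval_X, ← Nat.sub_add_cancel hN.le, Nat.add_sub_cancel, pow_add]
    have : v ^ r.natDegree * v⁻¹ ^ r.natDegree = 1 := by
      rw [← mul_pow, mul_inv_cancel₀ hv, one_pow]
    linear_combination v ^ (N - r.natDegree) * r.reverse.eval v * this
  exact h₀ (by rw [hs, Polynomial.eval_mul, Polynomial.eval_pow, Polynomial.eval_X,
    zero_pow (Nat.sub_ne_zero_of_lt hN), zero_mul])

theorem injOn_snd_filter_fst_eq {α β : Type*} [DecidableEq α] (s : Finset (α × β)) (a : α) :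
    Set.InjOn Prod.snd (s.filter (·.1 = a) : Set (α × β)) := fun _ hp _ hp' h ↦
  Prod.ext ((Finset.mem_filter.mp hp).2.trans (Finset.mem_filter.mp hp').2.symm) h

/-- The elimination of the second coordinate: the roots are the first coordinates of the common
points of the two curves. -/
noncomputable def verticalResultant (a b : MvPolynomial (Fin 2) k) : k[X] :=
  (verticalFiber (Polynomial.X : k[X]) a).resultant (verticalFiber (Polynomial.X : k[X]) b)

section Bezout

variable {a b : MvPolynomial (Fin 2) k}

theorem aeval_verticalResultant (ha : IsNoetherPosition a) (hb : IsNoetherPosition b)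
    {A : Type*} [CommRing A] [Nontrivial A] [Algebra k A] (x : A) :
    Polynomial.aeval x (verticalResultant a b) =
      (verticalFiber x a).resultant (verticalFiber x b) := by
  rw [verticalResultant, ha.natDegree_verticalFiber, hb.natDegree_verticalFiber,
    ha.natDegree_verticalFiber, hb.natDegree_verticalFiber, ← map_verticalFiber_X x a,
    ← map_verticalFiber_X x b, Polynomial.resultant_map_map, RingHom.coe_coe]

theorem eval_verticalResultant (ha : IsNoetherPosition a) (hb : IsNoetherPosition b) (v : k) :
    (verticalResultant a b).eval v = (verticalFiber v a).resultant (verticalFiber v b) := by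
  rw [← aeval_verticalResultant ha hb, Polynomial.coe_aeval_eq_eval]

variable [IsAlgClosed k]

theorem exists_eval_eq_zero_of_eval_verticalResultant_eq_zero (ha : IsNoetherPosition a)
    (hb : IsNoetherPosition b) {v : k} (h : (verticalResultant a b).eval v = 0) :
    ∃ w, eval ![v, w] a = 0 ∧ eval ![v, w] b = 0 := by
  rw [eval_verticalResultant ha hb] at h
  have h' := (Polynomial.resultant_eq_zero_iff.mp h).2
  rw [Polynomial.isCoprime_iff_aeval_ne_zero_of_isAlgClosed k k] at h'
  push Not at h'
  simpa only [Polynomial.coe_aeval_eq_eval, eval_verticalFiber] using h'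

theorem totalDegree_mul_le_natDegree_verticalResultant (ha : IsNoetherPosition a)
    (hb : IsNoetherPosition b) (ha' : IsNoetherPosition (chartAtInfinity a))
    (hb' : IsNoetherPosition (chartAtInfinity b))
    (h : ∀ w, eval ![0, w] (chartAtInfinity a) = 0 → eval ![0, w] (chartAtInfinity b) ≠ 0) :
    a.totalDegree * b.totalDegree ≤ (verticalResultant a b).natDegree := by
  refine le_natDegree_of_eval_eq_pow_mul_eval_inv
    (s := verticalResultant (chartAtInfinity a) (chartAtInfinity b)) (fun v hv ↦ ?_) fun h₀ ↦ ?_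
  · rw [eval_verticalResultant ha' hb', eval_verticalResultant ha hb,
      verticalFiber_chartAtInfinity ha hv, verticalFiber_chartAtInfinity hb hv,
      Polynomial.resultant_scaleRoots, ha.natDegree_verticalFiber, hb.natDegree_verticalFiber]
  · obtain ⟨w, hw, hw'⟩ := exists_eval_eq_zero_of_eval_verticalResultant_eq_zero ha' hb' h₀
    exact h w hw hw'

theorem rootMultiplicity_verticalResultant_le {h : MvPolynomial (Fin 2) k}
    (hh : IsNoetherPosition h) (hab : a * b ∣ h) {ζ : k}
    (hord : ∀ β, ∃ n, IsOrdinaryAt (verticalFiber (PowerSeries.C ζ + PowerSeries.X) h) β n)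
    {Z : Finset k} (hZ : ∀ β, eval ![ζ, β] a = 0 → eval ![ζ, β] b = 0 → β ∈ Z) :
    (verticalResultant a b).rootMultiplicity ζ ≤
      ∑ β ∈ Z, fiberMultiplicity (ζ, β) a * fiberMultiplicity (ζ, β) b := by
  set x : k⟦X⟧ := PowerSeries.C ζ + PowerSeries.X
  have ha := hh.of_dvd (dvd_of_mul_right_dvd hab)
  have hb := hh.of_dvd (dvd_of_mul_left_dvd hab)
  have hres := resultant_dvd_X_pow (hh.isUnit_leadingCoeff x) hord
    (A := verticalFiber x a) (B := verticalFiber x b) (Z := Z)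
    (by rw [← map_mul]; exact map_dvd _ hab) fun β hA hB ↦ by
      rw [specialFiber_verticalFiber, Polynomial.IsRoot, eval_verticalFiber] at hA hB
      exact hZ β hA hB
  have hpow := map_dvd (Polynomial.aeval x)
    ((verticalResultant a b).pow_rootMultiplicity_dvd ζ)
  rw [aeval_verticalResultant ha hb, map_pow, map_sub, Polynomial.aeval_X, Polynomial.aeval_C,
    show x - algebraMap k k⟦X⟧ ζ = PowerSeries.X from add_sub_cancel_left _ _] at hpow
  rw [specialFiber_verticalFiber, specialFiber_verticalFiber] at hres
  exact (pow_dvd_pow_iff PowerSeries.X_ne_zero PowerSeries.X_prime.not_isUnit).mp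
    (hpow.trans hres)

/-- A curve whose singularities, on the affine plane and at infinity, all lie in the finite set `S`
and are ordinary. For simplicity the equation is required to be the same near infinity. -/
structure HasOrdinarySingularities (h : MvPolynomial (Fin 2) k) (S : Finset (k × k)) : Prop where
  isNoetherPosition : IsNoetherPosition h
  chartAtInfinity_eq : chartAtInfinity h = h
  exists_isOrdinaryAt : ∀ p ∈ S, ∀ β, ∃ n,
    IsOrdinaryAt (verticalFiber (PowerSeries.C p.1 + PowerSeries.X) h) β n
  mem_of_eval_eq_zero : ∀ a b, a * b ∣ h → ∀ v w, eval ![v, w] a = 0 → eval ![v, w] b = 0 →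
    (v, w) ∈ S
  fst_ne_zero : ∀ p ∈ S, p.1 ≠ 0

theorem HasOrdinarySingularities.totalDegree_mul_le {h : MvPolynomial (Fin 2) k}
    {S : Finset (k × k)} (hS : HasOrdinarySingularities h S) (hab : a * b ∣ h) :
    a.totalDegree * b.totalDegree ≤ ∑ p ∈ S, fiberMultiplicity p a * fiberMultiplicity p b := by
  classical
  have hh := hS.isNoetherPosition
  have ha := hh.of_dvd (dvd_of_mul_right_dvd hab)
  have hb := hh.of_dvd (dvd_of_mul_left_dvd hab)
  have hab' : chartAtInfinity a * chartAtInfinity b ∣ h := by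
    rw [← chartAtInfinity_mul ha.ne_zero hb.ne_zero, ← hS.chartAtInfinity_eq]
    exact chartAtInfinity_dvd_chartAtInfinity hh.ne_zero hab
  refine (totalDegree_mul_le_natDegree_verticalResultant ha hb
    (hh.of_dvd (dvd_of_mul_right_dvd hab')) (hh.of_dvd (dvd_of_mul_left_dvd hab'))
    fun w hw hw' ↦ hS.fst_ne_zero _ (hS.mem_of_eval_eq_zero _ _ hab' 0 w hw hw') rfl).trans ?_
  set r := verticalResultant a b
  have hroots (ζ) (hζ : ζ ∈ r.roots) : ζ ∈ S.image Prod.fst := by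
    obtain ⟨w, hw, hw'⟩ := exists_eval_eq_zero_of_eval_verticalResultant_eq_zero ha hb
      (Polynomial.isRoot_of_mem_roots hζ)
    exact Finset.mem_image_of_mem Prod.fst (hS.mem_of_eval_eq_zero a b hab ζ w hw hw')
  rw [(IsAlgClosed.splits r).natDegree_eq_card_roots, ← Multiset.sum_count_eq_card hroots,
    ← Finset.sum_fiberwise_of_maps_to fun p ↦ Finset.mem_image_of_mem Prod.fst]
  refine Finset.sum_le_sum fun ζ hζ ↦ ?_
  obtain ⟨p, hp, rfl⟩ := Finset.mem_image.mp hζ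
  rw [Polynomial.count_roots]
  refine (rootMultiplicity_verticalResultant_le hh hab (hS.exists_isOrdinaryAt p hp)
    (Z := (S.filter (·.1 = p.1)).image Prod.snd) fun β hβ hβ' ↦ ?_).trans ?_
  · simpa using hS.mem_of_eval_eq_zero a b hab p.1 β hβ hβ'
  · rw [Finset.sum_image]
    · refine (Finset.sum_congr rfl fun s hs ↦ ?_).le
      rw [← (Finset.mem_filter.mp hs).2]
    · exact injOn_snd_filter_fst_eq S p.1

end Bezout

end Fiber

section SelfIntersection

variable {k : Type*} [Field k]

/-- The self-intersection number of the strict transform of the curve `a = 0` on the blow-up of the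
projective plane at the points of `S`. -/
noncomputable def selfIntersection (S : Finset (k × k)) (a : MvPolynomial (Fin 2) k) : ℤ :=
  (a.totalDegree : ℤ) ^ 2 - ∑ p ∈ S, (fiberMultiplicity p a : ℤ) ^ 2

variable {S : Finset (k × k)} {a b h : MvPolynomial (Fin 2) k}

theorem fiberMultiplicity_mul (hab : IsNoetherPosition (a * b)) (p : k × k) :
    fiberMultiplicity p (a * b) = fiberMultiplicity p a + fiberMultiplicity p b := by
  have := hab.verticalFiber_ne_zero p.1
  rw [map_mul] at this
  rw [fiberMultiplicity, map_mul, Polynomial.rootMultiplicity_mul this, fiberMultiplicity,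
    fiberMultiplicity]

theorem selfIntersection_nonpos_of_totalDegree_eq_zero (ha : a.totalDegree = 0) :
    selfIntersection S a ≤ 0 := by
  rw [selfIntersection, ha, Nat.cast_zero, zero_pow two_ne_zero, zero_sub, neg_nonpos]
  exact Finset.sum_nonneg fun p _ ↦ sq_nonneg _

theorem selfIntersection_nonpos_of_totalDegree_le_one (ha : a.totalDegree ≤ 1) {p : k × k}
    (hp : p ∈ S) (hpa : 0 < fiberMultiplicity p a) : selfIntersection S a ≤ 0 := by
  have hle : (fiberMultiplicity p a : ℤ) ^ 2 ≤ ∑ p ∈ S, (fiberMultiplicity p a : ℤ) ^ 2 :=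
    Finset.single_le_sum (f := fun p ↦ (fiberMultiplicity p a : ℤ) ^ 2)
      (fun p _ ↦ sq_nonneg _) hp
  rw [selfIntersection, sub_nonpos]
  refine le_trans ?_ hle
  exact pow_le_pow_left₀ (Nat.cast_nonneg _) (mod_cast ha.trans hpa) 2

theorem selfIntersection_map {σ : k →+* k} (hS : S.map
      ⟨Prod.map σ σ, σ.injective.prodMap σ.injective⟩ = S) (a : MvPolynomial (Fin 2) k) :
    selfIntersection S (map σ a) = selfIntersection S a := by
  have hdeg : (map σ a).totalDegree = a.totalDegree := by
    simp only [totalDegree, support_map_of_injective a σ.injective]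
  have hmult (p : k × k) :
      fiberMultiplicity (Prod.map σ σ p) (map σ a) = fiberMultiplicity p a := by
    rw [fiberMultiplicity, fiberMultiplicity,
      Polynomial.eq_rootMultiplicity_map (p := verticalFiber p.1 a) σ.injective,
      map_verticalFiber_of_comp (K := k) (σ := σ) (by ext; simp)]
    rfl
  rw [selfIntersection, selfIntersection, hdeg]
  nth_rw 1 [← hS]
  simp [hmult]

namespace HasOrdinarySingularities

variable [IsAlgClosed k]

theorem selfIntersection_mul_le (hS : HasOrdinarySingularities h S) (hab : a * b ∣ h) :
    selfIntersection S (a * b) ≤ selfIntersection S a + selfIntersection S b := by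
  have hpos := hS.isNoetherPosition.of_dvd hab
  have hbezout : (a.totalDegree * b.totalDegree : ℤ) ≤
      ∑ p ∈ S, (fiberMultiplicity p a * fiberMultiplicity p b : ℤ) :=
    mod_cast hS.totalDegree_mul_le hab
  simp only [selfIntersection, fiberMultiplicity_mul hpos, totalDegree_mul_of_isDomain
    (left_ne_zero_of_mul hpos.ne_zero) (right_ne_zero_of_mul hpos.ne_zero), Nat.cast_add, add_sq,
    Finset.sum_add_distrib, mul_assoc, ← Finset.mul_sum]
  linarith

-- The Hodge index theorem in this case is the Cauchy-Schwarz inequality.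
theorem selfIntersection_nonpos (hS : HasOrdinarySingularities h S) (hab : a * b ∣ h)
    (ha : 0 < selfIntersection S a) : selfIntersection S b ≤ 0 := by
  by_contra! hb
  have hbezout : (a.totalDegree * b.totalDegree : ℤ) ≤
      ∑ p ∈ S, (fiberMultiplicity p a * fiberMultiplicity p b : ℤ) :=
    mod_cast hS.totalDegree_mul_le hab
  have hcs := Finset.sum_mul_sq_le_sq_mul_sq S (fun p ↦ (fiberMultiplicity p a : ℤ))
    fun p ↦ (fiberMultiplicity p b : ℤ)
  have hle := (pow_le_pow_left₀ (by positivity) hbezout 2).trans hcs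
  rw [selfIntersection, sub_pos] at ha hb
  have hlt := mul_lt_mul'' ha hb (Finset.sum_nonneg fun p _ ↦ sq_nonneg _)
    (Finset.sum_nonneg fun p _ ↦ sq_nonneg _)
  rw [← mul_pow] at hlt
  exact hlt.not_ge hle

theorem exists_irreducible_selfIntersection_pos (hS : HasOrdinarySingularities h S) (hah : a ∣ h)
    (ha : 0 < selfIntersection S a) :
    ∃ b, Irreducible b ∧ b ∣ a ∧ 0 < selfIntersection S b := by
  induction a using WfDvdMonoid.induction_on_irreducible with
  | zero => exact absurd (zero_dvd_iff.mp hah) hS.isNoetherPosition.ne_zero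
  | unit u hu =>
    exact absurd ha (selfIntersection_nonpos_of_totalDegree_eq_zero
      (isUnit_iff_totalDegree_of_isReduced.mp hu).2).not_gt
  | mul a c _ hc ih =>
    obtain hpos | hnonpos := lt_or_ge 0 (selfIntersection S c)
    · exact ⟨c, hc, dvd_mul_right c a, hpos⟩
    · obtain ⟨b, hb, hba, hpos⟩ := ih (dvd_of_mul_left_dvd hah)
        (by linarith [hS.selfIntersection_mul_le hah])
      exact ⟨b, hb, hba.mul_left c, hpos⟩

end HasOrdinarySingularities

end SelfIntersection

section Descent

variable {ι F k : Type*} [Field F] [Field k] [Algebra F k] {σ : k →ₐ[F] k}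

theorem exists_map_algebraMap_eq (hσ : ∀ x, σ x = x → x ∈ (algebraMap F k).range)
    {a : MvPolynomial ι k} (ha : map (σ : k →+* k) a = a) :
    ∃ p : MvPolynomial ι F, map (algebraMap F k) p = a := by
  rw [← Set.mem_range, mem_range_map_iff_coeffs_subset]
  intro c hc
  obtain ⟨m, -, rfl⟩ := mem_coeffs_iff.mp hc
  exact hσ _ (by simpa only [coeff_map, RingHom.coe_coe] using congrArg (coeff m) ha)

theorem exists_associated_map_algebraMap (hσ : ∀ x, σ x = x → x ∈ (algebraMap F k).range)
    {a : MvPolynomial ι k} (ha : a ≠ 0) (hassoc : Associated a (map (σ : k →+* k) a)) :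
    ∃ p : MvPolynomial ι F, Associated a (map (algebraMap F k) p) := by
  obtain ⟨m, hm⟩ := ne_zero_iff.mp ha
  obtain ⟨u, hu⟩ := hassoc
  obtain ⟨c, -, hc⟩ := isUnit_iff_eq_C_of_isReduced.mp u.isUnit
  have hcoeff (n) : σ (coeff n a) = coeff n a * c := by
    have := congrArg (coeff n) hu
    rwa [hc, mul_comm a, coeff_C_mul, mul_comm c, coeff_map, RingHom.coe_coe, eq_comm] at this
  obtain ⟨p, hp⟩ := exists_map_algebraMap_eq hσ (a := C (coeff m a)⁻¹ * a) (by
    ext n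
    rw [coeff_map, coeff_C_mul, RingHom.coe_coe, map_mul, map_inv₀, hcoeff, hcoeff]
    have hc₀ : c ≠ 0 := by rintro rfl; simpa [hm] using hcoeff m
    field_simp)
  exact ⟨p, hp ▸ associated_unit_mul_right a _ ((inv_ne_zero hm).isUnit.map C)⟩

theorem dvd_of_map_algebraMap_dvd (hσ : ∀ x, σ x = x → x ∈ (algebraMap F k).range)
    {p q : MvPolynomial ι F} (hp : p ≠ 0) (h : map (algebraMap F k) p ∣ map (algebraMap F k) q) :
    p ∣ q := by
  have hinj := map_injective (σ := ι) (algebraMap F k) (algebraMap F k).injective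
  have hfix (r : MvPolynomial ι F) :
      map (σ : k →+* k) (map (algebraMap F k) r) = map (algebraMap F k) r := by
    rw [map_map, AlgHom.comp_algebraMap]
  obtain ⟨c, hc⟩ := h
  obtain ⟨d, rfl⟩ := exists_map_algebraMap_eq hσ (a := c) (by
    refine mul_left_cancel₀ ((map_ne_zero_iff _ hinj).mpr hp) ?_
    rw [← hc, ← hfix p, ← map_mul, ← hc, hfix])
  exact ⟨d, hinj (by rw [hc, map_mul])⟩

theorem exists_dvd_irreducible_map {σ : k ≃ₐ[F] k}
    (hσ : ∀ x, σ x = x → x ∈ (algebraMap F k).range) {g : MvPolynomial ι F} {a : MvPolynomial ι k}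
    (ha : Irreducible a) (hag : a ∣ map (algebraMap F k) g)
    (hnot : ¬ a * map (σ : k →+* k) a ∣ map (algebraMap F k) g) :
    ∃ p, p ∣ g ∧ 0 < p.totalDegree ∧ Irreducible (map (algebraMap F k) p) := by
  have hσa : Irreducible (map (σ : k →+* k) a) :=
    (MulEquiv.irreducible_iff (mapEquiv ι (σ : k ≃+* k))).mpr ha
  have hσag : map (σ : k →+* k) a ∣ map (algebraMap F k) g := by
    have := map_dvd (map (σ : k →+* k)) hag
    rwa [map_map, show (σ : k →+* k).comp (algebraMap F k) = algebraMap F k from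
      (σ : k →ₐ[F] k).comp_algebraMap] at this
  have hassoc : Associated a (map (σ : k →+* k) a) := by
    refine ha.associated_of_dvd hσa (by_contra fun hndvd ↦ hnot ?_)
    exact (ha.isRelPrime_iff_not_dvd.mpr hndvd).mul_dvd hag hσag
  obtain ⟨p, hp⟩ := exists_associated_map_algebraMap (σ := (σ : k →ₐ[F] k)) hσ ha.ne_zero hassoc
  have hpirr : Irreducible (map (algebraMap F k) p) := hp.irreducible ha
  have hp₀ : p ≠ 0 := by rintro rfl; simp at hpirr
  refine ⟨p, dvd_of_map_algebraMap_dvd (σ := (σ : k →ₐ[F] k)) hσ hp₀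
    (hp.dvd_iff_dvd_left.mp hag), Nat.pos_of_ne_zero fun hdeg ↦ hpirr.not_isUnit ?_, hpirr⟩
  rw [totalDegree_eq_zero_iff_eq_C.mp hdeg, C_ne_zero] at hp₀
  rw [totalDegree_eq_zero_iff_eq_C.mp hdeg]
  exact (hp₀.isUnit.map C).map (map (algebraMap F k))

end Descent

theorem derivative_verticalFiber {k A : Type*} [Field k] [CommRing A] [Algebra k A] (x : A)
    (a : MvPolynomial (Fin 2) k) :
    Polynomial.derivative (verticalFiber x a) = verticalFiber x (pderiv 1 a) := by
  induction a using MvPolynomial.induction_on with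
  | C c => simp [verticalFiber, Polynomial.algebraMap_apply]
  | add a b ha hb => simp only [map_add, ha, hb]
  | mul_X a j ha =>
    fin_cases j <;> simp [ha, verticalFiber_X_zero, verticalFiber_X_one, pderiv_X, mul_comm]

theorem eval_pderiv_eq_zero_of_mul_dvd {ι R : Type*} [CommRing R] {a b f : MvPolynomial ι R}
    (hab : a * b ∣ f) {p : ι → R} (ha : eval p a = 0) (hb : eval p b = 0) (j : ι) :
    eval p (pderiv j f) = 0 := by
  obtain ⟨c, rfl⟩ := hab
  simp [Derivation.leibniz, ha, hb]

theorem exists_mem_add_notMem {R : Type*} [Ring R] [IsDomain R] {s : Finset R}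
    (hs : (s.card : R) ≠ 0) {c : R} (hc : c ≠ 0) : ∃ x ∈ s, x + c ∉ s := by
  by_contra! h
  have hsum : ∑ x ∈ s, (x + c) = ∑ x ∈ s, x := by
    refine Finset.sum_nbij (· + c) h (add_left_injective c).injOn ?_ fun _ _ ↦ rfl
    exact Finset.surjOn_of_injOn_of_card_le _ h (add_left_injective c).injOn le_rfl
  rw [Finset.sum_add_distrib, add_eq_left, Finset.sum_const, nsmul_eq_mul] at hsum
  exact mul_ne_zero hs hc hsum

section Curve

open scoped Polynomial PowerSeries

variable {k : Type*} [Field k]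

variable (k) in
/-- The polynomial `f_t`, which vanishes outside the lines `x = 1`, `y = 1` and `x = y` at a point
over a field `K` of characteristic two only if `x ↦ x ^ t` fails to be almost perfect nonlinear on
`K`. -/
noncomputable def apnPolynomial (t : ℕ) : MvPolynomial (Fin 2) k :=
  X 0 ^ t + X 1 ^ t + 1 + (X 0 + X 1 + 1) ^ t

variable (k) in
/-- The singular points of `apnPolynomial k (2 ^ i * l + 1)` on the affine plane, when `l` divides
`2 ^ i - 1`. -/
noncomputable def singularPoints [DecidableEq k] (l : ℕ) : Finset (k × k) :=
  (Polynomial.nthRootsFinset l (1 : k) ×ˢ Polynomial.nthRootsFinset l (1 : k)).filter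
    fun p ↦ (p.1 + p.2 + 1) ^ l = 1

/-- The homogeneous polynomial of degree `2 ^ i + 1` that gives the tangents of the curve
`apnPolynomial k (2 ^ i * l + 1) = 0` at `(ζ, β)`, dehomogenized at the horizontal coordinate. -/
noncomputable def tangentPolynomial (i : ℕ) (ζ β : k) : k[X] :=
  Polynomial.C ζ⁻¹ + Polynomial.C β⁻¹ * Polynomial.X ^ (2 ^ i + 1) +
    Polynomial.C (ζ + β + 1)⁻¹ * (Polynomial.X + 1) ^ (2 ^ i + 1)

variable {i l : ℕ}

theorem mem_singularPoints [DecidableEq k] (hl : l ≠ 0) {ζ β : k} :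
    (ζ, β) ∈ singularPoints k l ↔ ζ ^ l = 1 ∧ β ^ l = 1 ∧ (ζ + β + 1) ^ l = 1 := by
  simp [singularPoints, Polynomial.mem_nthRootsFinset hl.bot_lt, and_assoc]

section Exponent

variable (hi : i ≠ 0) (hl : l ∣ 2 ^ i - 1)

include hl in
theorem pow_two_pow_eq_self_of_pow_eq_one {M : Type*} [Monoid M] {x : M} (hx : x ^ l = 1) :
    x ^ 2 ^ i = x := by
  obtain ⟨m, hm⟩ := hl
  rw [← Nat.sub_add_cancel (Nat.one_le_two_pow (n := i)), hm, pow_succ, pow_mul, hx, one_pow,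
    one_mul]

include hi hl in
theorem odd_of_dvd_two_pow_sub_one : Odd l :=
  (Nat.Even.sub_odd Nat.one_le_two_pow ((Nat.even_pow' hi).mpr even_two) odd_one).of_dvd_nat hl

include hi hl in
theorem natCast_eq_one_of_dvd_two_pow_sub_one {A : Type*} [CommRing A] [CharP A 2] :
    (l : A) = 1 := by
  obtain ⟨m, rfl⟩ := odd_of_dvd_two_pow_sub_one hi hl
  push_cast
  rw [CharTwo.two_eq_zero, zero_mul, zero_add]

include hi hl in
theorem exists_add_pow_eq {A : Type*} [CommRing A] [Algebra k A] [CharP A 2] {α : k}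
    (hα : α ^ l = 1) (u : A) :
    ∃ M, (algebraMap k A α + u) ^ (2 ^ i * l + 1) = algebraMap k A α + u + u ^ 2 ^ i +
      algebraMap k A α⁻¹ * u ^ (2 ^ i + 1) + u ^ (2 ^ i + 2) * M := by
  have hl₀ := (odd_of_dvd_two_pow_sub_one hi hl).pos
  have hα₀ : α ≠ 0 := (IsUnit.of_pow_eq_one hα hl₀.ne').ne_zero
  have hinv : α ^ (l - 1) = α⁻¹ := by rw [pow_sub₀ _ hα₀ hl₀, hα, one_mul, pow_one]
  have hinv' : α⁻¹ ^ 2 ^ i = α⁻¹ := by rw [inv_pow, pow_two_pow_eq_self_of_pow_eq_one hl hα]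
  have hmul : algebraMap k A α * algebraMap k A α⁻¹ = 1 := by
    rw [← map_mul, mul_inv_cancel₀ hα₀, map_one]
  obtain ⟨N, hN⟩ := Polynomial.powAddExpansion (algebraMap k A α) u l
  rw [natCast_eq_one_of_dvd_two_pow_sub_one hi hl, one_mul, ← map_pow, ← map_pow, hα, hinv,
    map_one] at hN
  obtain ⟨r, hr⟩ := Nat.exists_eq_add_of_le (Nat.le_self_pow hi 2)
  have hfrob : (algebraMap k A α + u) ^ (2 ^ i * l) =
      1 + algebraMap k A α⁻¹ * u ^ 2 ^ i + N ^ 2 ^ i * u ^ (2 ^ i + 2 + r) := by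
    rw [mul_comm (2 ^ i) l, pow_mul, hN, add_pow_char_pow, add_pow_char_pow, one_pow, mul_pow,
      mul_pow, ← map_pow, hinv', ← pow_mul, add_assoc (2 ^ i), ← hr, two_mul]
  refine ⟨(algebraMap k A α + u) * N ^ 2 ^ i * u ^ r, ?_⟩
  rw [pow_succ, hfrob, pow_add u (2 ^ i + 2)]
  linear_combination u ^ 2 ^ i * hmul

include hi hl in
theorem exists_comp_verticalFiber_apnPolynomial_eq [CharP k 2] {ζ β : k} (hζ : ζ ^ l = 1)
    (hβ : β ^ l = 1) (hγ : (ζ + β + 1) ^ l = 1) :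
    ∃ W, specialFiber W = tangentPolynomial i ζ β ∧
      (verticalFiber (PowerSeries.C ζ + PowerSeries.X) (apnPolynomial k (2 ^ i * l + 1))).comp
          (Polynomial.C (PowerSeries.C β) + Polynomial.C PowerSeries.X * Polynomial.X) =
        Polynomial.C PowerSeries.X ^ (2 ^ i + 1) * W := by
  have : CharP k⟦X⟧ 2 := charP_of_injective_ringHom PowerSeries.C_injective 2
  set u : k⟦X⟧[X] := Polynomial.C PowerSeries.X with hu
  set x : k⟦X⟧[X] := Polynomial.X with hx
  obtain ⟨M₁, h₁⟩ := exists_add_pow_eq hi hl hζ u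
  obtain ⟨M₂, h₂⟩ := exists_add_pow_eq hi hl hβ (u * x)
  obtain ⟨M₃, h₃⟩ := exists_add_pow_eq hi hl hγ (u * (x + 1))
  have halg (c : k) :
      algebraMap k k⟦X⟧[X] c = Polynomial.C (PowerSeries.C c) := rfl
  have htangent : (tangentPolynomial i ζ β).map PowerSeries.C = algebraMap k k⟦X⟧[X] ζ⁻¹ +
      algebraMap k k⟦X⟧[X] β⁻¹ * x ^ (2 ^ i + 1) +
      algebraMap k k⟦X⟧[X] (ζ + β + 1)⁻¹ * (x + 1) ^ (2 ^ i + 1) := by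
    simp [tangentPolynomial, halg, hx]
  refine ⟨(tangentPolynomial i ζ β).map PowerSeries.C +
    u * (M₁ + x ^ (2 ^ i + 2) * M₂ + (x + 1) ^ (2 ^ i + 2) * M₃), ?_, ?_⟩
  · simp [specialFiber, hu, Polynomial.map_map]
  · have hcomp : (verticalFiber (PowerSeries.C ζ + PowerSeries.X)
        (apnPolynomial k (2 ^ i * l + 1))).comp (Polynomial.C (PowerSeries.C β) + u * x) =
        (algebraMap k _ ζ + u) ^ (2 ^ i * l + 1) + (algebraMap k _ β + u * x) ^ (2 ^ i * l + 1) +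
          1 + (algebraMap k _ (ζ + β + 1) + u * (x + 1)) ^ (2 ^ i * l + 1) := by
      simp only [apnPolynomial, map_add, map_pow, map_one, verticalFiber_X_zero,
        verticalFiber_X_one, hu, hx, Polynomial.add_comp, Polynomial.pow_comp, Polynomial.C_comp,
        Polynomial.X_comp, Polynomial.one_comp, halg]
      ring
    have hfrob : (x + 1) ^ 2 ^ i = x ^ 2 ^ i + 1 := by rw [add_pow_char_pow, one_pow]
    rw [hcomp, h₁, h₂, h₃, htangent, map_add (algebraMap k k⟦X⟧[X]), map_add, map_one]
    simp only [mul_pow]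
    linear_combination u ^ 2 ^ i * hfrob + CharTwo.add_self_eq_zero
      (algebraMap k k⟦X⟧[X] ζ + algebraMap k k⟦X⟧[X] β + 1 + u + u * x + u ^ 2 ^ i +
        (u * x) ^ 2 ^ i)

include hi hl in
theorem separable_tangentPolynomial [CharP k 2] [IsAlgClosed k] {ζ β : k} (hζ : ζ ^ l = 1)
    (hβ : β ^ l = 1) (hγ : (ζ + β + 1) ^ l = 1) : (tangentPolynomial i ζ β).Separable := by
  refine (Polynomial.isCoprime_iff_aeval_ne_zero_of_isAlgClosed k k _ _).mpr fun s ↦ ?_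
  by_contra! hs
  obtain ⟨hs, hs'⟩ := hs
  have hne {α : k} (hα : α ^ l = 1) : α ≠ 0 :=
    (IsUnit.of_pow_eq_one hα (odd_of_dvd_two_pow_sub_one hi hl).pos.ne').ne_zero
  have hroot {α r : k} (hα : α ^ l = 1) (h : α⁻¹ * r ^ 2 ^ i = ζ⁻¹) : ζ * r = α := by
    have : α⁻¹ * r = ζ⁻¹ := iterateFrobenius_inj k 2 i (by
      rw [iterateFrobenius_def, iterateFrobenius_def, mul_pow, inv_pow, inv_pow,
        pow_two_pow_eq_self_of_pow_eq_one hl hα, pow_two_pow_eq_self_of_pow_eq_one hl hζ, h])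
    rwa [inv_mul_eq_iff_eq_mul₀ (hne hα), eq_mul_inv_iff_mul_eq₀ (hne hζ), mul_comm] at this
  have heval : ζ⁻¹ + β⁻¹ * s ^ (2 ^ i + 1) + (ζ + β + 1)⁻¹ * (s + 1) ^ (2 ^ i + 1) = 0 := by
    simpa [tangentPolynomial] using hs
  have hderiv : β⁻¹ * s ^ 2 ^ i + (ζ + β + 1)⁻¹ * (s + 1) ^ 2 ^ i = 0 := by
    simpa [tangentPolynomial, Polynomial.derivative_pow, hi, CharTwo.two_eq_zero] using hs'
  rw [pow_succ, pow_succ] at heval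
  have hγ_root : ζ * (s + 1) = ζ + β + 1 := hroot hγ <| by
    linear_combination heval - s * hderiv - CharTwo.add_self_eq_zero ζ⁻¹
  have hβ_root : ζ * s = β := hroot hβ <| by
    linear_combination heval - (s + 1) * hderiv +
      CharTwo.add_self_eq_zero (β⁻¹ * s ^ 2 ^ i) - CharTwo.add_self_eq_zero ζ⁻¹
  exact one_ne_zero (α := k) (by linear_combination hβ_root - hγ_root)

end Exponent

theorem natDegree_tangentPolynomial_one [CharP k 2] (hi : i ≠ 0) {β : k} (hβ : β ≠ 0) :
    (tangentPolynomial i 1 β).natDegree = 2 ^ i := by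
  have h : tangentPolynomial i 1 β = Polynomial.C β⁻¹ * Polynomial.X ^ 2 ^ i +
      (Polynomial.C β⁻¹ * Polynomial.X + Polynomial.C (1 + β⁻¹)) := by
    rw [tangentPolynomial, add_right_comm 1, CharTwo.add_self_eq_zero, zero_add, pow_succ, pow_succ,
      add_pow_char_pow, one_pow, inv_one, Polynomial.C_add]
    linear_combination CharTwo.add_self_eq_zero
      (Polynomial.C β⁻¹ * Polynomial.X ^ 2 ^ i * Polynomial.X)
  rw [h, Polynomial.natDegree_add_eq_left_of_natDegree_lt, Polynomial.natDegree_C_mul_X_pow]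
  · exact inv_ne_zero hβ
  · rw [Polynomial.natDegree_C_mul_X_pow _ _ (inv_ne_zero hβ)]
    exact Polynomial.natDegree_linear_le.trans_lt (Nat.one_lt_two_pow hi)

theorem natDegree_tangentPolynomial [CharP k 2] {ζ β : k} (hζ : ζ ≠ 1) :
    (tangentPolynomial i ζ β).natDegree = 2 ^ i + 1 := by
  have h : tangentPolynomial i ζ β =
      Polynomial.C (β⁻¹ + (ζ + β + 1)⁻¹) * Polynomial.X ^ (2 ^ i + 1) +
      (Polynomial.C (ζ + β + 1)⁻¹ * (Polynomial.X ^ 2 ^ i + Polynomial.X + 1) +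
      Polynomial.C ζ⁻¹) := by
    rw [tangentPolynomial, pow_succ, pow_succ, add_pow_char_pow, one_pow, Polynomial.C_add]
    ring
  have hne : β⁻¹ + (ζ + β + 1)⁻¹ ≠ 0 := by
    rw [Ne, CharTwo.add_eq_zero, inv_inj, add_right_comm, eq_comm, add_eq_right,
      CharTwo.add_eq_zero]
    exact hζ
  rw [h, Polynomial.natDegree_add_eq_left_of_natDegree_lt, Polynomial.natDegree_C_mul_X_pow _ _ hne]
  rw [Polynomial.natDegree_C_mul_X_pow _ _ hne, Nat.lt_succ_iff]
  compute_degree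
  exact max_le le_rfl Nat.one_le_two_pow

theorem verticalFiber_apnPolynomial {A : Type*} [CommRing A] [Algebra k A] (x : A) (t : ℕ) :
    verticalFiber x (apnPolynomial k t) = Polynomial.C (x ^ t + 1) + Polynomial.X ^ t +
      (Polynomial.X + Polynomial.C (x + 1)) ^ t := by
  simp only [apnPolynomial, map_add, map_pow, map_one, verticalFiber_X_zero, verticalFiber_X_one]
  ring

theorem pderiv_apnPolynomial [CharP k 2] {m : ℕ} (hm : Even m) (j : Fin 2) :
    pderiv j (apnPolynomial k (m + 1)) = X j ^ m + (X 0 + X 1 + 1) ^ m := by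
  have hcast : ((m + 1 : ℕ) : MvPolynomial (Fin 2) k) = 1 := by
    obtain ⟨r, rfl⟩ := hm
    rw [Nat.cast_succ, Nat.cast_add, CharTwo.add_self_eq_zero, zero_add]
  fin_cases j <;> simp [apnPolynomial, pderiv_X, hcast, -Nat.cast_add]

theorem totalDegree_apnPolynomial_le (t : ℕ) : (apnPolynomial k t).totalDegree ≤ t := by
  have hadd {a b : MvPolynomial (Fin 2) k} {n : ℕ} (ha : a.totalDegree ≤ n)
      (hb : b.totalDegree ≤ n) : (a + b).totalDegree ≤ n :=
    (totalDegree_add a b).trans (max_le ha hb)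
  have hpow {a : MvPolynomial (Fin 2) k} (ha : a.totalDegree ≤ 1) : (a ^ t).totalDegree ≤ t :=
    (totalDegree_pow a t).trans (by simpa using Nat.mul_le_mul_left t ha)
  have hX (j : Fin 2) : (X j : MvPolynomial (Fin 2) k).totalDegree ≤ 1 := (totalDegree_X j).le
  have hone (n : ℕ) : (1 : MvPolynomial (Fin 2) k).totalDegree ≤ n := by simp
  exact hadd (hadd (hadd (hpow (hX 0)) (hpow (hX 1))) (hone t))
    (hpow (hadd (hadd (hX 0) (hX 1)) (hone 1)))

section Component

variable [CharP k 2] {m : ℕ} {h : MvPolynomial (Fin 2) k}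
  (hh : (X 0 + 1) * h = apnPolynomial k (m + 1))

include hh

omit [CharP k 2] in
theorem C_mul_verticalFiber_eq {A : Type*} [CommRing A] [Algebra k A] (x : A) :
    Polynomial.C (x + 1) * verticalFiber x h = verticalFiber x (apnPolynomial k (m + 1)) := by
  rw [← hh, map_mul, map_add (verticalFiber x), map_one, verticalFiber_X_zero, Polynomial.C_add,
    Polynomial.C_1]

theorem isMonicOfDegree_verticalFiber (hm : Even m) (hm₀ : m ≠ 0) :
    (verticalFiber (Polynomial.X : k[X]) h).IsMonicOfDegree m := by
  have hX : (Polynomial.X + 1 : k[X]) ≠ 0 := Polynomial.X_add_C_ne_zero 1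
  have hcoeff (n : ℕ) := congrArg (Polynomial.coeff · n)
    (C_mul_verticalFiber_eq hh (Polynomial.X : k[X]))
  simp only [verticalFiber_apnPolynomial, Polynomial.coeff_C_mul, Polynomial.coeff_add,
    Polynomial.coeff_X_add_C_pow, Polynomial.coeff_X_pow, Polynomial.coeff_C] at hcoeff
  have hlead : (verticalFiber (Polynomial.X : k[X]) h).coeff m = 1 := by
    have hcast : ((m + 1 : ℕ) : k[X]) = 1 := by
      obtain ⟨r, rfl⟩ := hm
      rw [Nat.cast_succ, Nat.cast_add, CharTwo.add_self_eq_zero, zero_add]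
    have := hcoeff m
    rw [if_neg hm₀, if_neg m.succ_ne_self.symm, Nat.choose_succ_self_right, hcast,
      Nat.add_sub_cancel_left, pow_one, mul_one, zero_add, zero_add] at this
    exact mul_left_cancel₀ hX (this.trans (mul_one _).symm)
  have hdeg : (verticalFiber (Polynomial.X : k[X]) h).natDegree ≤ m := by
    refine Polynomial.natDegree_le_iff_coeff_eq_zero.mpr fun n hn ↦ ?_
    have := hcoeff n
    obtain rfl | hn' := eq_or_ne n (m + 1)
    · simpa [hX, CharTwo.add_self_eq_zero] using this
    · simpa [hX, hn', (Nat.zero_lt_of_lt hn).ne', Nat.choose_eq_zero_of_lt (show m + 1 < n by lia)]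
        using this
  exact (Polynomial.isMonicOfDegree_iff _ _).mpr ⟨hdeg, hlead⟩

theorem isNoetherPosition_and_totalDegree_eq (hm : Even m) (hm₀ : m ≠ 0) :
    IsNoetherPosition h ∧ h.totalDegree = m := by
  obtain ⟨hdeg, hmonic⟩ := isMonicOfDegree_verticalFiber hh hm hm₀
  have hX : verticalFiber (Polynomial.X : k[X]) (X 0 + 1 : MvPolynomial (Fin 2) k) ≠ 0 := by
    rw [map_add, map_one, verticalFiber_X_zero, ← Polynomial.C_1, ← Polynomial.C_add]
    exact Polynomial.C_ne_zero.mpr (Polynomial.X_add_C_ne_zero 1)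
  have h₀ : h ≠ 0 := by rintro rfl; simp at hmonic
  have hdegX : (X 0 + 1 : MvPolynomial (Fin 2) k).totalDegree = 1 := by
    rw [totalDegree_add_eq_left_of_totalDegree_lt] <;> simp
  have hle := totalDegree_apnPolynomial_le (k := k) (m + 1)
  rw [← hh, totalDegree_mul_of_isDomain (by rintro h; simp [h] at hX) h₀, hdegX] at hle
  have htotal : h.totalDegree = m :=
    le_antisymm (by lia) (hdeg ▸ natDegree_verticalFiber_le Polynomial.X h)
  exact ⟨⟨by rw [hmonic.leadingCoeff]; exact isUnit_one, hdeg.trans htotal.symm⟩, htotal⟩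

theorem chartAtInfinity_eq_self [Infinite k] (hdeg : h.totalDegree = m) :
    chartAtInfinity h = h := by
  classical
  refine mvPolynomial_ext_of_eval {0, 1} fun v hv w ↦ ?_
  simp only [Finset.mem_insert, Finset.mem_singleton, not_or] at hv
  obtain ⟨hv₀, hv₁⟩ := hv
  have heq (x y : k) : (x + 1) * eval ![x, y] h =
      x ^ (m + 1) + y ^ (m + 1) + 1 + (x + y + 1) ^ (m + 1) := by
    simpa [apnPolynomial] using congrArg (eval ![x, y]) hh
  have hv' : v + 1 ≠ 0 := by rwa [Ne, CharTwo.add_eq_zero]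
  rw [eval_chartAtInfinity h hv₀, hdeg]
  refine mul_left_cancel₀ hv' ?_
  calc (v + 1) * (v ^ m * eval ![v⁻¹, v⁻¹ * w] h)
      = v ^ (m + 1) * ((v⁻¹ + 1) * eval ![v⁻¹, v⁻¹ * w] h) := by field_simp; ring
    _ = (v * v⁻¹) ^ (m + 1) + (v * (v⁻¹ * w)) ^ (m + 1) + v ^ (m + 1) +
          (v * (v⁻¹ + v⁻¹ * w + 1)) ^ (m + 1) := by
      rw [heq]; simp only [mul_pow]; ring
    _ = (v + 1) * eval ![v, w] h := by
      rw [heq, mul_add, mul_add, mul_inv_cancel_left₀ hv₀, mul_inv_cancel₀ hv₀]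
      ring

theorem eval_one_eq (hm : Even m) (w : k) : eval ![1, w] h = 1 + w ^ m := by
  have hw : 1 + w + 1 = w := by rw [add_right_comm, CharTwo.add_self_eq_zero, zero_add]
  have hderiv : eval ![1, w] (pderiv 0 ((X 0 + 1) * h)) =
      eval ![1, w] (pderiv 0 (apnPolynomial k (m + 1))) := by rw [hh]
  simpa [pderiv_apnPolynomial hm, CharTwo.add_self_eq_zero, hw] using hderiv

end Component

section Singularities

variable [CharP k 2] {h : MvPolynomial (Fin 2) k}

theorem pow_two_pow_mul_eq_one_iff {x : k} : x ^ (2 ^ i * l) = 1 ↔ x ^ l = 1 := by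
  rw [mul_comm, pow_mul, ← iterateFrobenius_def 2 i]
  exact map_eq_one_iff _ (iterateFrobenius_inj k 2 i)

variable (hi : i ≠ 0) (hl : l ∣ 2 ^ i - 1)
  (hh : (X 0 + 1) * h = apnPolynomial k (2 ^ i * l + 1))

include hi hl hh

theorem mem_singularPoints_of_eval_eq_zero [DecidableEq k] {a b : MvPolynomial (Fin 2) k}
    (hab : a * b ∣ h) {v w : k} (ha : eval ![v, w] a = 0) (hb : eval ![v, w] b = 0) :
    (v, w) ∈ singularPoints k l := by
  have hm : Even (2 ^ i * l) := ((Nat.even_pow' hi).mpr even_two).mul_right l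
  have habf : a * b ∣ apnPolynomial k (2 ^ i * l + 1) := hh ▸ hab.mul_left (X 0 + 1)
  have hf : eval ![v, w] (apnPolynomial k (2 ^ i * l + 1)) = 0 := by
    obtain ⟨c, hc⟩ := habf
    rw [hc, map_mul, map_mul, ha, zero_mul, zero_mul]
  have hderiv (j : Fin 2) := eval_pderiv_eq_zero_of_mul_dvd habf ha hb j
  simp only [pderiv_apnPolynomial hm, map_add, map_pow, eval_X, map_one,
    CharTwo.add_eq_zero] at hderiv
  have hv : v ^ (2 ^ i * l) = (v + w + 1) ^ (2 ^ i * l) := hderiv 0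
  have hw : w ^ (2 ^ i * l) = (v + w + 1) ^ (2 ^ i * l) := hderiv 1
  have hone : (v + w + 1) ^ (2 ^ i * l) = 1 := by
    have : v ^ (2 ^ i * l + 1) + w ^ (2 ^ i * l + 1) + 1 + (v + w + 1) ^ (2 ^ i * l + 1) = 0 := by
      simpa [apnPolynomial] using hf
    rw [pow_succ, pow_succ, pow_succ, hv, hw] at this
    linear_combination this - (v + w + 1) ^ (2 ^ i * l) * CharTwo.add_self_eq_zero (v + w) -
      CharTwo.add_self_eq_zero (1 : k)
  rw [hone, pow_two_pow_mul_eq_one_iff] at hv hw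
  rw [pow_two_pow_mul_eq_one_iff] at hone
  exact (mem_singularPoints (odd_of_dvd_two_pow_sub_one hi hl).pos.ne').mpr ⟨hv, hw, hone⟩

variable [IsAlgClosed k] [DecidableEq k]

theorem isOrdinaryAt_of_mem_singularPoints {ζ β : k} (hmem : (ζ, β) ∈ singularPoints k l) :
    IsOrdinaryAt (verticalFiber (PowerSeries.C ζ + PowerSeries.X) h) β
      (if ζ = 1 then 2 ^ i else 2 ^ i + 1) := by
  have hl₀ := (odd_of_dvd_two_pow_sub_one hi hl).pos.ne'
  obtain ⟨hζ, hβ, hγ⟩ := (mem_singularPoints hl₀).mp hmem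
  obtain ⟨W, hW, hcomp⟩ := exists_comp_verticalFiber_apnPolynomial_eq hi hl hζ hβ hγ
  have hsep := separable_tangentPolynomial hi hl hζ hβ hγ
  have : CharP k⟦X⟧ 2 := charP_of_injective_ringHom PowerSeries.C_injective 2
  rw [← C_mul_verticalFiber_eq hh, Polynomial.mul_comp, Polynomial.C_comp] at hcomp
  split_ifs with hζ₁
  · obtain rfl : ζ = 1 := hζ₁
    refine ⟨W, hW ▸ hsep, hW ▸ natDegree_tangentPolynomial_one hi
      (IsUnit.of_pow_eq_one hβ hl₀).ne_zero,
      mul_left_cancel₀ (Polynomial.C_ne_zero.mpr PowerSeries.X_ne_zero) ?_⟩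
    rw [map_one, add_right_comm, CharTwo.add_self_eq_zero, zero_add] at hcomp
    rw [map_one, hcomp, pow_succ', mul_assoc]
  · obtain ⟨u, hu⟩ : IsUnit (PowerSeries.C ζ + PowerSeries.X + 1) := by
      rw [PowerSeries.isUnit_iff_constantCoeff]
      simpa [CharTwo.add_eq_zero] using hζ₁
    have hu' : Polynomial.C u.val * Polynomial.C (u⁻¹).val = 1 := by
      rw [← Polynomial.C_mul, u.mul_inv, Polynomial.C_1]
    have hc : (u⁻¹).val.constantCoeff ≠ 0 := (u⁻¹.isUnit.map PowerSeries.constantCoeff).ne_zero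
    have hspecial : specialFiber (Polynomial.C (u⁻¹).val * W) =
        Polynomial.C (u⁻¹).val.constantCoeff * tangentPolynomial i ζ β := by
      rw [specialFiber, Polynomial.map_mul, Polynomial.map_C, ← hW]
    refine ⟨Polynomial.C (u⁻¹).val * W, ?_, ?_, ?_⟩
    · rw [hspecial]
      exact hsep.unit_mul (Polynomial.isUnit_C.mpr hc.isUnit)
    · rw [hspecial, Polynomial.natDegree_C_mul hc, natDegree_tangentPolynomial hζ₁]
    · rw [mul_left_comm, ← hcomp, ← hu]
      linear_combination -hu' * (verticalFiber _ h).comp _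

omit [DecidableEq k] in
theorem exists_isOrdinaryAt {ζ : k} (hζ : ζ ^ l = 1) (β : k) :
    ∃ n, IsOrdinaryAt (verticalFiber (PowerSeries.C ζ + PowerSeries.X) h) β n := by
  classical
  have hl₀ := (odd_of_dvd_two_pow_sub_one hi hl).pos.ne'
  have hm : Even (2 ^ i * l) := ((Nat.even_pow' hi).mpr even_two).mul_right l
  by_cases hmem : (ζ, β) ∈ singularPoints k l
  · exact ⟨_, isOrdinaryAt_of_mem_singularPoints hi hl hh hmem⟩
  by_cases hroot : (verticalFiber ζ h).eval β = 0
  swap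
  · exact ⟨0, isOrdinaryAt_zero (by rwa [specialFiber_verticalFiber])⟩
  refine ⟨1, isOrdinaryAt_one (by rwa [specialFiber_verticalFiber]) fun hderiv ↦ hmem ?_⟩
  rw [specialFiber_verticalFiber, derivative_verticalFiber] at hderiv
  obtain rfl | hζ₁ := eq_or_ne ζ 1
  · rw [eval_verticalFiber, eval_one_eq hh hm, CharTwo.add_eq_zero, eq_comm,
      pow_two_pow_mul_eq_one_iff] at hroot
    refine (mem_singularPoints hl₀).mpr ⟨hζ, hroot, ?_⟩
    rwa [add_right_comm, CharTwo.add_self_eq_zero, zero_add]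
  have hf : ζ ^ (2 ^ i * l + 1) + β ^ (2 ^ i * l + 1) + 1 + (ζ + β + 1) ^ (2 ^ i * l + 1) = 0 := by
    have := congrArg (eval ![ζ, β]) hh
    rw [map_mul, ← eval_verticalFiber ζ β h, hroot, mul_zero] at this
    simpa [apnPolynomial] using this.symm
  have hγ : β ^ (2 ^ i * l) = (ζ + β + 1) ^ (2 ^ i * l) := by
    have : eval ![ζ, β] (pderiv 1 ((X 0 + 1) * h)) = 0 := by
      rw [eval_verticalFiber] at hderiv
      simp [pderiv_X, hderiv]
    rw [hh, pderiv_apnPolynomial hm] at this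
    simpa [CharTwo.add_eq_zero] using this
  have hζm : ζ ^ (2 ^ i * l) = 1 := by rw [mul_comm, pow_mul, hζ, one_pow]
  have hone : (ζ + 1) * (1 + β ^ (2 ^ i * l)) = 0 := by
    rw [pow_succ, pow_succ, pow_succ, hζm, ← hγ] at hf
    linear_combination hf - β ^ (2 ^ i * l) * CharTwo.add_self_eq_zero β
  have hβ : β ^ (2 ^ i * l) = 1 := by
    rw [mul_eq_zero, CharTwo.add_eq_zero, CharTwo.add_eq_zero] at hone
    exact (hone.resolve_left hζ₁).symm
  rw [hβ, eq_comm, pow_two_pow_mul_eq_one_iff] at hγ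
  rw [pow_two_pow_mul_eq_one_iff] at hβ
  exact (mem_singularPoints hl₀).mpr ⟨hζ, hβ, hγ⟩

theorem hasOrdinarySingularities : HasOrdinarySingularities h (singularPoints k l) := by
  have hl₀ := (odd_of_dvd_two_pow_sub_one hi hl).pos.ne'
  have hm : Even (2 ^ i * l) := ((Nat.even_pow' hi).mpr even_two).mul_right l
  obtain ⟨hpos, hdeg⟩ := isNoetherPosition_and_totalDegree_eq hh hm (by positivity)
  have hroot {p : k × k} (hp : p ∈ singularPoints k l) : p.1 ^ l = 1 :=
    ((mem_singularPoints hl₀).mp hp).1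
  exact {
    isNoetherPosition := hpos
    chartAtInfinity_eq := chartAtInfinity_eq_self hh hdeg
    exists_isOrdinaryAt := fun p hp ↦ exists_isOrdinaryAt hi hl hh (hroot hp)
    mem_of_eval_eq_zero := fun a b hab v w ↦ mem_singularPoints_of_eval_eq_zero hi hl hh hab
    fst_ne_zero := fun p hp ↦ (IsUnit.of_pow_eq_one (hroot hp) hl₀).ne_zero }

theorem fiberMultiplicity_le {p : k × k} (hp : p ∈ singularPoints k l) :
    fiberMultiplicity p h ≤ if p.1 = 1 then 2 ^ i else 2 ^ i + 1 := by
  have := (isOrdinaryAt_of_mem_singularPoints hi hl hh hp).rootMultiplicity_le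
  rwa [specialFiber_verticalFiber] at this

end Singularities

section Counting

theorem card_nthRootsFinset_one_le (l : ℕ) : (Polynomial.nthRootsFinset l (1 : k)).card ≤ l := by
  classical
  rw [Polynomial.nthRootsFinset_def]
  exact (Multiset.toFinset_card_le _).trans (Polynomial.card_nthRoots l 1)

variable [DecidableEq k]

theorem image_snd_filter_subset (ζ : k) :
    ((singularPoints k l).filter (·.1 = ζ)).image Prod.snd ⊆ Polynomial.nthRootsFinset l 1 := by
  intro β hβ
  obtain ⟨p, hp, rfl⟩ := Finset.mem_image.mp hβ
  exact (Finset.mem_product.mp (Finset.mem_filter.mp (Finset.mem_filter.mp hp).1).1).2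

theorem card_filter_fst_eq_le (ζ : k) : ((singularPoints k l).filter (·.1 = ζ)).card ≤ l := by
  rw [← Finset.card_image_of_injOn (injOn_snd_filter_fst_eq _ ζ)]
  exact (Finset.card_le_card (image_snd_filter_subset ζ)).trans (card_nthRootsFinset_one_le l)

theorem card_filter_fst_eq_lt [CharP k 2] (hl : (l : k) ≠ 0) {ζ : k} (hζ : ζ ≠ 1) :
    ((singularPoints k l).filter (·.1 = ζ)).card < l := by
  have hl₀ : l ≠ 0 := by rintro rfl; exact hl Nat.cast_zero
  by_contra! hle
  rw [← Finset.card_image_of_injOn (injOn_snd_filter_fst_eq _ ζ)] at hle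
  have hfiber := Finset.eq_of_subset_of_card_le (image_snd_filter_subset ζ)
    ((card_nthRootsFinset_one_le l).trans hle)
  have hcard : (Polynomial.nthRootsFinset l (1 : k)).card = l :=
    (card_nthRootsFinset_one_le l).antisymm (hfiber ▸ hle)
  obtain ⟨β, hβ, hγ⟩ := exists_mem_add_notMem (by rwa [hcard]) (c := ζ + 1)
    (by rwa [Ne, CharTwo.add_eq_zero])
  rw [← hfiber] at hβ
  obtain ⟨p, hp, rfl⟩ := Finset.mem_image.mp hβ
  obtain ⟨hmem, rfl⟩ := Finset.mem_filter.mp hp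
  rw [Polynomial.mem_nthRootsFinset hl₀.bot_lt, add_left_comm, ← add_assoc] at hγ
  exact hγ ((mem_singularPoints hl₀).mp hmem).2.2

theorem sum_singularPoints_le [CharP k 2] (hl : (l : k) ≠ 0) {f : k × k → ℕ} {q r : ℕ}
    (hf : ∀ p ∈ singularPoints k l, f p ≤ if p.1 = 1 then q else r) :
    ∑ p ∈ singularPoints k l, f p ≤ l * q + (l - 1) * ((l - 1) * r) := by
  have hl₀ : l ≠ 0 := by rintro rfl; exact hl Nat.cast_zero
  set μ := Polynomial.nthRootsFinset l (1 : k)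
  have hμ : (1 : k) ∈ μ := (Polynomial.mem_nthRootsFinset hl₀.bot_lt 1).mpr (one_pow l)
  have hmaps : ∀ p ∈ singularPoints k l, p.1 ∈ μ := fun p hp ↦
    (Finset.mem_product.mp (Finset.mem_filter.mp hp).1).1
  have hfiber (ζ : k) : ∑ p ∈ singularPoints k l with p.1 = ζ, f p ≤
      ((singularPoints k l).filter (·.1 = ζ)).card * if ζ = 1 then q else r := by
    rw [← smul_eq_mul]
    refine Finset.sum_le_card_nsmul _ _ _ fun p hp ↦ ?_
    obtain ⟨hmem, rfl⟩ := Finset.mem_filter.mp hp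
    exact hf p hmem
  rw [← Finset.sum_fiberwise_of_maps_to hmaps, ← Finset.add_sum_erase _ _ hμ]
  refine add_le_add ((hfiber 1).trans ?_) ?_
  · rw [if_pos rfl]
    exact Nat.mul_le_mul_right q (card_filter_fst_eq_le 1)
  · refine (Finset.sum_le_card_nsmul _ _ ((l - 1) * r) fun ζ hζ ↦ (hfiber ζ).trans ?_).trans ?_
    · rw [if_neg (Finset.ne_of_mem_erase hζ)]
      exact Nat.mul_le_mul_right r
        (Nat.le_sub_one_of_lt (card_filter_fst_eq_lt hl (Finset.ne_of_mem_erase hζ)))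
    · rw [smul_eq_mul, Finset.card_erase_of_mem hμ]
      exact Nat.mul_le_mul_right _ (Nat.sub_le_sub_right (card_nthRootsFinset_one_le l) 1)

end Counting

theorem two_mul_lt_two_pow_of_dvd (hi : i ≠ 0) (hl : l ∣ 2 ^ i - 1) (hne : l ≠ 2 ^ i - 1) :
    2 * l < 2 ^ i := by
  obtain ⟨c, hc⟩ := hl
  have hpos : 1 < 2 ^ i := Nat.one_lt_two_pow hi
  have hc₂ : 2 ≤ c := by
    by_contra! h
    interval_cases c <;> lia
  have := Nat.mul_le_mul_left l hc₂
  lia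

theorem add_sq_lt_sq {l q : ℕ} (hl : 1 < l) (hq : 2 * l < q) :
    l * q ^ 2 + (l - 1) * ((l - 1) * (q + 1) ^ 2) < (q * l) ^ 2 := by
  obtain ⟨n, rfl⟩ := Nat.exists_eq_add_of_lt hl
  obtain ⟨r, rfl⟩ := Nat.exists_eq_add_of_lt hq
  calc (1 + n + 1) * (2 * (1 + n + 1) + r + 1) ^ 2 +
        (1 + n) * ((1 + n) * (2 * (1 + n + 1) + r + 1 + 1) ^ 2)
      < (1 + n + 1) * (2 * (1 + n + 1) + r + 1) ^ 2 +
        (1 + n) * ((1 + n) * (2 * (1 + n + 1) + r + 1 + 1) ^ 2) +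
        (1 + n) * (r ^ 2 + 2 * n * r + 8 * r + 5 * n + 14) :=
          Nat.lt_add_of_pos_right (by positivity)
    _ = ((2 * (1 + n + 1) + r + 1) * (1 + n + 1)) ^ 2 := by ring

section Positivity

variable [CharP k 2] [IsAlgClosed k] [DecidableEq k] (hi : i ≠ 0) (hl₁ : 1 < l)
  (hl : l ∣ 2 ^ i - 1) (hne : l ≠ 2 ^ i - 1)

include hi hl₁ hl hne

theorem selfIntersection_singularPoints_pos {h : MvPolynomial (Fin 2) k}
    (hh : (X 0 + 1) * h = apnPolynomial k (2 ^ i * l + 1)) :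
    0 < selfIntersection (singularPoints k l) h := by
  have hm : Even (2 ^ i * l) := ((Nat.even_pow' hi).mpr even_two).mul_right l
  have hmult : ∀ p ∈ singularPoints k l, fiberMultiplicity p h ^ 2 ≤
      if p.1 = 1 then (2 ^ i) ^ 2 else (2 ^ i + 1) ^ 2 := fun p hp ↦
    (Nat.pow_le_pow_left (fiberMultiplicity_le hi hl hh hp) 2).trans_eq (apply_ite (· ^ 2) _ _ _)
  have hcast : (l : k) ≠ 0 := by
    rw [natCast_eq_one_of_dvd_two_pow_sub_one hi hl]
    exact one_ne_zero
  rw [selfIntersection, (isNoetherPosition_and_totalDegree_eq hh hm (by positivity)).2, sub_pos]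
  exact_mod_cast (sum_singularPoints_le hcast hmult).trans_lt
    (add_sq_lt_sq hl₁ (two_mul_lt_two_pow_of_dvd hi hl hne))

theorem selfIntersection_singularPoints_pos_of_mul_eq {g : MvPolynomial (Fin 2) k}
    (hg : (X 0 + 1) * ((X 1 + 1) * ((X 0 + X 1) * g)) = apnPolynomial k (2 ^ i * l + 1)) :
    0 < selfIntersection (singularPoints k l) g := by
  have hS := hasOrdinarySingularities hi hl hg
  have hmem : ((1, 1) : k × k) ∈ singularPoints k l := by
    simp [mem_singularPoints (Nat.ne_zero_of_lt hl₁), CharTwo.add_self_eq_zero]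
  have hline {a : MvPolynomial (Fin 2) k} (ha : a.totalDegree ≤ 1)
      (hfiber : verticalFiber (1 : k) a = Polynomial.X + Polynomial.C 1) :
      selfIntersection (singularPoints k l) a ≤ 0 := by
    refine selfIntersection_nonpos_of_totalDegree_le_one ha hmem ?_
    rw [fiberMultiplicity, hfiber, Polynomial.rootMultiplicity_pos (Polynomial.X_add_C_ne_zero 1)]
    simp [CharTwo.add_self_eq_zero]
  have hy := hline (a := X 1 + 1) ((totalDegree_add _ _).trans (by simp))
    (by simp [verticalFiber_X_one])
  have hxy := hline (a := X 0 + X 1) ((totalDegree_add _ _).trans (by simp))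
    (by simp [verticalFiber_X_zero, verticalFiber_X_one, add_comm])
  have h₁ := hS.selfIntersection_mul_le (dvd_refl _)
  have h₂ := hS.selfIntersection_mul_le (dvd_mul_left _ (X 1 + 1))
  linarith [selfIntersection_singularPoints_pos hi hl₁ hl hne hg]

end Positivity

theorem map_singularPoints [DecidableEq k] (hl : l ≠ 0) (σ : k →+* k) :
    (singularPoints k l).map ⟨Prod.map σ σ, σ.injective.prodMap σ.injective⟩ =
      singularPoints k l := by
  refine Finset.eq_of_subset_of_card_le ?_ (Finset.card_map _).ge
  rw [Finset.map_subset_iff_subset_preimage]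
  rintro ⟨ζ, β⟩ hp
  obtain ⟨hζ, hβ, hγ⟩ := (mem_singularPoints hl).mp hp
  rw [Finset.mem_preimage]
  exact (mem_singularPoints hl).mpr ⟨by rw [← map_pow, hζ, map_one], by rw [← map_pow, hβ, map_one],
    by rw [← map_add, ← map_one σ, ← map_add, ← map_pow, hγ]⟩

end Curve

/-- Main theorem: if `t = 2^i ℓ + 1` with `ℓ ∣ 2^i - 1` and `ℓ ≠ 2^i - 1`, then `g_t`
has an absolutely irreducible factor defined over `𝔽₂`. -/
theorem stmt_18 (i l t : ℕ) (hi : 1 ≤ i) (hl : 3 ≤ l) (hlodd : Odd l)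
    (ht : t = 2 ^ i * l + 1) (hdvd : l ∣ 2 ^ i - 1) (hne : l ≠ 2 ^ i - 1)
    (g : MvPolynomial (Fin 2) (ZMod 2))
    (hg : (X 0 + 1) * (X 1 + 1) * (X 0 + X 1) * g =
      X 0 ^ t + X 1 ^ t + 1 + (X 0 + X 1 + 1) ^ t) :
    ∃ p : MvPolynomial (Fin 2) (ZMod 2), p ∣ g ∧ 0 < p.totalDegree ∧
      Irreducible (MvPolynomial.map (algebraMap (ZMod 2) (AlgebraicClosure (ZMod 2))) p) := by
  classical
  subst ht
  set k := AlgebraicClosure (ZMod 2)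
  have hi₀ : i ≠ 0 := Nat.ne_zero_of_lt hi
  have hg' : (X 0 + 1) * ((X 1 + 1) * ((X 0 + X 1) * map (algebraMap (ZMod 2) k) g)) =
      apnPolynomial k (2 ^ i * l + 1) := by
    simpa [apnPolynomial, mul_assoc] using congrArg (map (algebraMap (ZMod 2) k)) hg
  have hS := hasOrdinarySingularities hi₀ hdvd hg'
  have hgdvd : map (algebraMap (ZMod 2) k) g ∣ _ := (dvd_mul_left _ (X 0 + X 1)).mul_left (X 1 + 1)
  obtain ⟨a, ha, hag, hpos⟩ := hS.exists_irreducible_selfIntersection_pos hgdvd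
    (selfIntersection_singularPoints_pos_of_mul_eq hi₀ (by lia) hdvd hne hg')
  let σ := FiniteField.frobeniusAlgEquivOfAlgebraic (ZMod 2) k
  refine exists_dvd_irreducible_map (σ := σ) (fun x hx ↦ ?_) ha hag fun hdvd ↦ ?_
  · have hidem : IsIdempotentElem x := by simpa [σ, IsIdempotentElem, ← sq] using hx
    obtain rfl | rfl := IsIdempotentElem.iff_eq_zero_or_one.mp hidem
    exacts [zero_mem _, one_mem _]
  · refine (hS.selfIntersection_nonpos (hdvd.trans hgdvd) hpos).not_gt ?_
    rwa [selfIntersection_map (map_singularPoints (by lia) _)]
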